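/- arXiv:2102.02360 — 3 statements merged into one kernel-verified Lean document; each statement's English description precedes it below -/
import Mathlib

section
/- Let q be a real number with q > 0 and q ≠ 1, and let d_0 and d_1 be integers with d_0 > d_1 ≥ 1. Then the (finite) sum over all integers m ≥ 1, all integers n_1 > n_2 > … > n_m > 0, all integers k_1, …, k_m > 0 and k_0 ≥ 0 satisfying k_0 + k_1 + … + k_m = d_1 and n_1 k_1 + … + n_m k_m = d_0 − d_1, of the product [2d_0 choose k_1]_q · [2d_0 − 2(n_1−n_2)k_1 choose k_2]_q ⋯ [2d_0 − 2∑_{j=1}^{m−1}(n_j−n_m)k_j choose k_m]_q · [2d_1 choose k_0]_q, equals ([2d_0]_q/[d_0]_q) · [d_0 choose d_1]_q · [d_0+d_1−1 choose d_0]_q. -/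
attribute [local instance] Classical.propDecidable

/-- The symmetric ("physics convention") `q`-integer `[a]_q = q^{a/2} - q^{-a/2}`. -/
noncomputable def qint (q : ℝ) (a : ℤ) : ℝ :=
  q ^ ((a : ℝ) / 2) - q ^ (-((a : ℝ) / 2))

/-- The `q`-binomial coefficient
`[n choose k]_q = ([n]_q [n-1]_q ⋯ [n-k+1]_q)/([k]_q [k-1]_q ⋯ [1]_q)` for `0 ≤ k ≤ n`,
and `0` otherwise. -/
noncomputable def qbinom (q : ℝ) (n k : ℤ) : ℝ :=
  if 0 ≤ k ∧ k ≤ n then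
    (∏ i ∈ Finset.range k.toNat, qint q (n - (i : ℤ))) /
      ∏ i ∈ Finset.range k.toNat, qint q (k - (i : ℤ))
  else 0

theorem qint_zero (q : ℝ) : qint q 0 = 0 := by simp [qint]

theorem qint_ne_zero {q : ℝ} (hq0 : 0 < q) (hq1 : q ≠ 1) {a : ℤ} (ha : a ≠ 0) :
    qint q a ≠ 0 := by
  have ha' : (a : ℝ) ≠ 0 := by exact_mod_cast ha
  intro h
  have h' := (Real.rpow_right_inj hq0 hq1).1 (sub_eq_zero.1 h)
  apply ha'
  linarith

/-- The even companion of `qint`, used to linearise products of symmetric `q`-integers. -/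
noncomputable def qcosh (q : ℝ) (a : ℤ) : ℝ :=
  q ^ ((a : ℝ) / 2) + q ^ (-((a : ℝ) / 2))

theorem qcosh_neg (q : ℝ) (a : ℤ) : qcosh q (-a) = qcosh q a := by
  simp [qcosh, neg_div, add_comm]

theorem qint_mul_qint {q : ℝ} (hq0 : 0 < q) (a b : ℤ) :
    qint q a * qint q b = qcosh q (a + b) - qcosh q (a - b) := by
  simp only [qint, qcosh, sub_mul, mul_sub, ← Real.rpow_add hq0]
  push_cast
  ring_nf

/-- The symmetric `q`-binomial coefficient with arbitrary integer upper index,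
which is zero for negative lower index. -/
noncomputable def gaussBinom (q : ℝ) (n k : ℤ) : ℝ :=
  if 0 ≤ k then
    (∏ i ∈ Finset.range k.toNat, qint q (n - (i : ℤ))) /
      ∏ i ∈ Finset.range k.toNat, qint q ((i : ℤ) + 1)
  else 0

theorem gaussBinom_natCast (q : ℝ) (n : ℤ) (k : ℕ) :
    gaussBinom q n k =
      (∏ i ∈ Finset.range k, qint q (n - (i : ℤ))) / ∏ i ∈ Finset.range k, qint q ((i : ℤ) + 1) := by
  simp [gaussBinom]

theorem gaussBinom_of_neg (q : ℝ) (n : ℤ) {k : ℤ} (hk : k < 0) : gaussBinom q n k = 0 := by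
  simp [gaussBinom, not_le.2 hk]

@[simp]
theorem gaussBinom_zero_right (q : ℝ) (n : ℤ) : gaussBinom q n 0 = 1 := by
  simp [gaussBinom]

theorem prod_qint_ne_zero {q : ℝ} (hq0 : 0 < q) (hq1 : q ≠ 1) (k : ℕ) :
    ∏ i ∈ Finset.range k, qint q ((i : ℤ) + 1) ≠ 0 :=
  Finset.prod_ne_zero_iff.2 fun _ _ => qint_ne_zero hq0 hq1 (by lia)

theorem gaussBinom_add_one_right {q : ℝ} (hq0 : 0 < q) (hq1 : q ≠ 1) (n k : ℤ) :
    gaussBinom q n (k + 1) * qint q (k + 1) = gaussBinom q n k * qint q (n - k) := by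
  rcases lt_or_ge k 0 with hk | hk
  · rcases eq_or_lt_of_le (show k ≤ -1 by lia) with rfl | h
    · simp [qint_zero, gaussBinom_of_neg]
    · rw [gaussBinom_of_neg q n hk, gaussBinom_of_neg q n (by lia), zero_mul, zero_mul]
  · lift k to ℕ using hk
    have h1 := prod_qint_ne_zero hq0 hq1 k
    have h2 : qint q ((k : ℤ) + 1) ≠ 0 := qint_ne_zero hq0 hq1 (by lia)
    have := gaussBinom_natCast q n (k + 1)
    push_cast at this
    rw [this, gaussBinom_natCast, Finset.prod_range_succ, Finset.prod_range_succ]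
    field_simp

theorem gaussBinom_add_one_add_one {q : ℝ} (hq0 : 0 < q) (hq1 : q ≠ 1) (n k : ℤ) :
    gaussBinom q (n + 1) (k + 1) * qint q (k + 1) = gaussBinom q n k * qint q (n + 1) := by
  rcases lt_or_ge k 0 with hk | hk
  · rcases eq_or_lt_of_le (show k ≤ -1 by lia) with rfl | h
    · simp [qint_zero, gaussBinom_of_neg]
    · rw [gaussBinom_of_neg q n hk, gaussBinom_of_neg q _ (by lia), zero_mul, zero_mul]
  · lift k to ℕ using hk
    have h1 := prod_qint_ne_zero hq0 hq1 k
    have h2 : qint q ((k : ℤ) + 1) ≠ 0 := qint_ne_zero hq0 hq1 (by lia)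
    have := gaussBinom_natCast q (n + 1) (k + 1)
    push_cast at this
    rw [this, gaussBinom_natCast, Finset.prod_range_succ', Finset.prod_range_succ]
    simp only [Nat.cast_add, Nat.cast_one, Nat.cast_zero, sub_zero, add_sub_add_right_eq_sub]
    field_simp

theorem gaussBinom_add_one_left {q : ℝ} (hq0 : 0 < q) (hq1 : q ≠ 1) (n k : ℤ) :
    gaussBinom q (n + 1) k * qint q (n + 1 - k) = gaussBinom q n k * qint q (n + 1) := by
  rw [← gaussBinom_add_one_add_one hq0 hq1, gaussBinom_add_one_right hq0 hq1]

theorem gaussBinom_self {q : ℝ} (hq0 : 0 < q) (hq1 : q ≠ 1) {n : ℤ} (hn : 0 ≤ n) :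
    gaussBinom q n n = 1 := by
  induction n, hn using Int.leInduction with
  | base => simp
  | succ n hn ih =>
    have h := gaussBinom_add_one_add_one hq0 hq1 n n
    rw [ih] at h
    exact mul_right_cancel₀ (qint_ne_zero hq0 hq1 (by lia : n + 1 ≠ 0)) h

theorem gaussBinom_symm {q : ℝ} (hq0 : 0 < q) (hq1 : q ≠ 1) {a b : ℤ} (ha : 0 ≤ a) (hb : 0 ≤ b) :
    gaussBinom q (a + b) a = gaussBinom q (a + b) b := by
  induction b, hb using Int.leInduction with
  | base => simp [gaussBinom_self hq0 hq1 ha]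
  | succ b hb ih =>
    have h1 := gaussBinom_add_one_add_one hq0 hq1 (a + b) b
    have h2 := gaussBinom_add_one_left hq0 hq1 (a + b) a
    rw [← ih, ← h2, show a + b + 1 - a = b + 1 by ring] at h1
    rw [← add_assoc]
    exact (mul_right_cancel₀ (qint_ne_zero hq0 hq1 (by lia)) h1).symm

theorem qbinom_eq_gaussBinom (q : ℝ) {n k : ℤ} (hn : 0 ≤ n) (hk : 0 ≤ k) :
    qbinom q n k = gaussBinom q n k := by
  rw [qbinom, gaussBinom, if_pos hk]
  split_ifs with h
  · congr 1
    rw [← Finset.prod_range_reflect]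
    refine Finset.prod_congr rfl fun i hi => ?_
    rw [Finset.mem_range] at hi
    congr 1
    lia
  · rw [Finset.prod_eq_zero (i := n.toNat) (by rw [Finset.mem_range]; lia), zero_div]
    rw [Int.toNat_of_nonneg hn, sub_self, qint_zero]

/-- A `q`-Pfaff–Saalschütz summation in symmetric normalisation. -/
theorem sum_gaussBinom_saalschuetz {q : ℝ} (hq0 : 0 < q) (hq1 : q ≠ 1) (M r : ℤ)
    {a : ℕ} (ha : 1 ≤ a) {N : ℕ} (hN : a < N) :
    ∑ b ∈ Finset.range N, gaussBinom q (M + 1 - r) (a - b) * gaussBinom q r b *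
        gaussBinom q (M + b) (b - 1) =
      gaussBinom q M (a - 1) * gaussBinom q (a + r - 1) a := by
  induction a, ha using Nat.le_induction with
  | base =>
    rw [Finset.sum_eq_single 1]
    · simp
    · intro b _ hb
      rcases Nat.lt_or_gt_of_ne hb with h | h
      · rw [gaussBinom_of_neg q (M + b) (by lia), mul_zero]
      · rw [gaussBinom_of_neg q (M + 1 - r) (by lia), zero_mul, zero_mul]
    · intro h
      simp at h
      lia
  | succ a ha ih =>
    specialize ih (by lia)
    have ha0 : qint q a ≠ 0 := qint_ne_zero hq0 hq1 (by lia)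
    have ha1 : qint q (a + 1) ≠ 0 := qint_ne_zero hq0 hq1 (by lia)
    let H : ℕ → ℝ := fun b => qint q b * qint q (b - 1) *
      (gaussBinom q (M + 1 - r) (a + 1 - b) * gaussBinom q r b * gaussBinom q (M + b) (b - 1))
    have key : ∀ b : ℕ, qint q a * qint q (a + 1) *
          (gaussBinom q (M + 1 - r) (a + 1 - b) * gaussBinom q r b *
            gaussBinom q (M + b) (b - 1)) =
        qint q (M - a + 1) * qint q (a + r) *
          (gaussBinom q (M + 1 - r) (a - b) * gaussBinom q r b * gaussBinom q (M + b) (b - 1)) +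
        (H b - H (b + 1)) := by
      intro b
      have e1 : qint q a * qint q (a + 1) - qint q b * qint q (b - 1) =
          qint q (a + b) * qint q (a + 1 - b) := by
        simp only [qint_mul_qint hq0]
        rw [show (a : ℤ) - (a + 1) = -1 by ring, qcosh_neg]
        ring_nf
      have e2 : qint q (M - a + 1) * qint q (a + r) - qint q (r - b) * qint q (M + b + 1) =
          qint q (a + b) * qint q (M + 1 - r - (a - b)) := by
        simp only [qint_mul_qint hq0]
        rw [← qcosh_neg q (r - b - (M + b + 1)), ← qcosh_neg q (a + b - _)]
        ring_nf
      have g1 := gaussBinom_add_one_right hq0 hq1 (M + 1 - r) (a - b)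
      have g2 := gaussBinom_add_one_right hq0 hq1 r b
      have g3 := gaussBinom_add_one_add_one hq0 hq1 (M + b) (b - 1)
      rw [sub_add_cancel] at g3
      rw [show (a : ℤ) - b + 1 = a + 1 - b by ring] at g1
      have hH : H (b + 1) = gaussBinom q (M + 1 - r) (a - b) *
          (gaussBinom q r b * qint q (r - b)) *
          (gaussBinom q (M + b) (b - 1) * qint q (M + b + 1)) := by
        rw [← g2, ← g3]
        simp only [H]
        push_cast
        rw [show (a : ℤ) + 1 - (b + 1) = a - b by ring, add_sub_cancel_right, add_assoc]
        ring
      rw [hH]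
      simp only [H]
      linear_combination gaussBinom q r b * gaussBinom q (M + b) (b - 1) *
        (gaussBinom q (M + 1 - r) (a + 1 - b) * e1 - gaussBinom q (M + 1 - r) (a - b) * e2 +
          qint q (a + b) * g1)
    have hsum := Finset.sum_congr (rfl : Finset.range N = Finset.range N) fun b _ => key b
    rw [← Finset.mul_sum, Finset.sum_add_distrib, ← Finset.mul_sum, ih,
      Finset.sum_range_sub'] at hsum
    have h0 : H 0 = 0 := by simp [H, qint_zero]
    have h1 : H N = 0 := by
      simp only [H]
      rw [gaussBinom_of_neg q (M + 1 - r) (by lia)]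
      ring
    have r1 := gaussBinom_add_one_right hq0 hq1 M (a - 1)
    have r2 := gaussBinom_add_one_add_one hq0 hq1 (a + r - 1) a
    rw [sub_add_cancel] at r1 r2
    rw [show M - ((a : ℤ) - 1) = M - a + 1 by ring] at r1
    push_cast
    rw [add_sub_cancel_right, show (a : ℤ) + 1 + r - 1 = a + r by ring]
    apply mul_left_cancel₀ (mul_ne_zero ha0 ha1)
    rw [hsum, h0, h1]
    linear_combination -gaussBinom q (a + r) (a + 1) * qint q (a + 1) * r1 -
      gaussBinom q M (a - 1) * qint q (M - a + 1) * r2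

theorem gaussBinom_eq_zero_of_lt (q : ℝ) {n k : ℤ} (hn : 0 ≤ n) (hk : n < k) :
    gaussBinom q n k = 0 := by
  rw [← qbinom_eq_gaussBinom q hn (by lia), qbinom, if_neg (by lia)]

/-- The product of `q`-binomial coefficients attached to the multiplicities `κ x` of the
levels `x = 0, …, L - 1`. -/
noncomputable def levelWeight (q : ℝ) (D : ℤ) {L : ℕ} (κ : Fin L → ℤ) : ℝ :=
  ∏ x : Fin L,
    gaussBinom q (2 * D - 2 * ∑ y : Fin L, if x < y then ((y : ℤ) - (x : ℤ)) * κ y else 0) (κ x)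

/-- The sum of `levelWeight` over all multiplicities in `[0, K]` with total `a` and
weighted total `r`. -/
noncomputable def levelSum (q : ℝ) (D K : ℤ) (L : ℕ) (a r : ℤ) : ℝ :=
  ∑ κ ∈ Fintype.piFinset (fun _ : Fin L => Finset.Icc (0 : ℤ) K),
    if ∑ x, κ x = a ∧ ∑ x : Fin L, (x : ℤ) * κ x = r then levelWeight q D κ else 0

theorem sum_piFinset_const_succ {α β : Type*} [AddCommMonoid β] (s : Finset α) (L : ℕ)
    (f : (Fin (L + 1) → α) → β) :
    ∑ κ ∈ Fintype.piFinset (fun _ : Fin (L + 1) => s), f κ =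
      ∑ k ∈ s, ∑ κ ∈ Fintype.piFinset (fun _ : Fin L => s), f (Fin.cons k κ) := by
  rw [← Finset.sum_product']
  refine Finset.sum_bij' (fun κ _ => (κ 0, Fin.tail κ)) (fun p _ => Fin.cons p.1 p.2) ?_ ?_ ?_ ?_ ?_
  · intro κ hκ
    simp only [Fintype.mem_piFinset, Finset.mem_product] at hκ ⊢
    exact ⟨hκ 0, fun i => hκ i.succ⟩
  · intro p hp
    simp only [Fintype.mem_piFinset, Finset.mem_product] at hp ⊢
    exact Fin.cases hp.1 hp.2
  · intro κ _
    simp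
  · intro p _
    simp
  · intro κ _
    simp

theorem levelWeight_cons (q : ℝ) (D k : ℤ) {L : ℕ} (κ : Fin L → ℤ) :
    levelWeight q D (Fin.cons k κ : Fin (L + 1) → ℤ) =
      gaussBinom q (2 * D - 2 * ∑ x : Fin L, ((x : ℤ) + 1) * κ x) k * levelWeight q D κ := by
  simp only [levelWeight, Fin.prod_univ_succ, Fin.sum_univ_succ, Fin.cons_zero, Fin.cons_succ]
  simp

theorem levelSum_succ (q : ℝ) (D K : ℤ) (L : ℕ) (a r : ℤ) :
    levelSum q D K (L + 1) a r =
      ∑ k ∈ Finset.Icc (0 : ℤ) K,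
        gaussBinom q (2 * D - 2 * r) k * levelSum q D K L (a - k) (r - (a - k)) := by
  rw [levelSum, sum_piFinset_const_succ]
  refine Finset.sum_congr rfl fun k _ => ?_
  rw [levelSum, Finset.mul_sum]
  refine Finset.sum_congr rfl fun κ _ => ?_
  have h1 : ∑ x, (Fin.cons k κ : Fin (L + 1) → ℤ) x = k + ∑ x, κ x := by
    simp [Fin.sum_univ_succ]
  have h2 : ∑ x : Fin (L + 1), (x : ℤ) * (Fin.cons k κ : Fin (L + 1) → ℤ) x = ∑ x : Fin L, ((x : ℤ) + 1) * κ x := by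
    simp [Fin.sum_univ_succ]
  have h3 : ∑ x : Fin L, ((x : ℤ) + 1) * κ x = ∑ x : Fin L, (x : ℤ) * κ x + ∑ x, κ x := by
    simp [add_mul, Finset.sum_add_distrib]
  rw [h1, h2, levelWeight_cons]
  by_cases h : k + ∑ x, κ x = a ∧ ∑ x : Fin L, ((x : ℤ) + 1) * κ x = r
  · rw [if_pos h, if_pos (by lia), h.2]
  · rw [if_neg h, if_neg (by lia), mul_zero]

theorem levelSum_eq_zero_of_neg (q : ℝ) (D K : ℤ) (L : ℕ) {a r : ℤ} (h : a < 0 ∨ r < 0) :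
    levelSum q D K L a r = 0 := by
  refine Finset.sum_eq_zero fun κ hκ => if_neg ?_
  simp only [Fintype.mem_piFinset, Finset.mem_Icc] at hκ
  have h1 : 0 ≤ ∑ x, κ x := Finset.sum_nonneg fun x _ => (hκ x).1
  have h2 : 0 ≤ ∑ x : Fin L, (x : ℤ) * κ x :=
    Finset.sum_nonneg fun x _ => mul_nonneg (by positivity) (hκ x).1
  lia

theorem levelSum_zero_left (q : ℝ) (D : ℤ) {K : ℤ} (hK : 0 ≤ K) (L : ℕ) (r : ℤ) :
    levelSum q D K L 0 r = if r = 0 then 1 else 0 := by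
  rw [levelSum, Finset.sum_eq_single 0]
  · simp [levelWeight, eq_comm]
  · intro κ hκ hne
    simp only [Fintype.mem_piFinset, Finset.mem_Icc] at hκ
    refine if_neg fun h => hne ?_
    funext x
    exact (Finset.sum_eq_zero_iff_of_nonneg fun x _ => (hκ x).1).1 h.1 x (Finset.mem_univ x)
  · intro h
    simp [hK] at h

theorem levelSum_eq {q : ℝ} (hq0 : 0 < q) (hq1 : q ≠ 1) (D K : ℤ) (L : ℕ) {a r : ℕ}
    (ha : (a : ℤ) ≤ K) (hr : r < L) :
    levelSum q D K L a r =
      if r = 0 then gaussBinom q (2 * D) a else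
        qint q (2 * D) / qint q r *
          (gaussBinom q (2 * D - r - 1) (a - 1) * gaussBinom q (a + r - 1) a) := by
  induction L generalizing a r with
  | zero => lia
  | succ L ih =>
    have hsum : levelSum q D K (L + 1) a r = ∑ b ∈ Finset.range (a + 1),
        gaussBinom q (2 * D - 2 * r) (a - b) * levelSum q D K L b (r - b) := by
      rw [levelSum_succ]
      symm
      refine Finset.sum_of_injOn (fun b : ℕ => (a : ℤ) - b) ?_ ?_ ?_ ?_
      · intro b _ c _ h
        simpa using h
      · intro b hb
        simp only [Finset.coe_range, Set.mem_Iio, Finset.coe_Icc, Set.mem_Icc] at hb ⊢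
        lia
      · intro k hk hk'
        rw [Finset.mem_Icc] at hk
        rw [levelSum_eq_zero_of_neg q D K L (Or.inl ?_), mul_zero]
        by_contra! h
        exact hk' ⟨(a - k).toNat, by simp; lia, by simp; lia⟩
      · intro b _
        simp
    rw [hsum]
    rcases Nat.eq_zero_or_pos r with rfl | hr0
    · rw [if_pos rfl, Finset.sum_eq_single 0]
      · simp [levelSum_zero_left q D (show 0 ≤ K by lia)]
      · intro b _ hb
        rw [levelSum_eq_zero_of_neg q D K L (Or.inr (by lia)), mul_zero]
      · simp
    · rw [if_neg hr0.ne']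
      have hrne : qint q r ≠ 0 := qint_ne_zero hq0 hq1 (by lia)
      have hterm : ∀ b ∈ Finset.range (a + 1),
          gaussBinom q (2 * D - 2 * r) (a - b) * levelSum q D K L b (r - b) =
          qint q (2 * D) / qint q r * (gaussBinom q (2 * D - r - 1 + 1 - r) (a - b) *
            gaussBinom q r b * gaussBinom q (2 * D - r - 1 + b) (b - 1)) := by
        intro b hb
        rw [Finset.mem_range] at hb
        rw [show 2 * D - r - 1 + 1 - r = 2 * D - 2 * (r : ℤ) by ring]
        suffices h : levelSum q D K L b (r - b) = qint q (2 * D) / qint q r *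
            (gaussBinom q r b * gaussBinom q (2 * D - r - 1 + b) (b - 1)) by
          rw [h]
          ring
        rcases Nat.eq_zero_or_pos b with rfl | hb0
        · rw [gaussBinom_of_neg q (2 * D - r - 1 + _) (by lia), Nat.cast_zero,
            levelSum_zero_left q D (by lia), if_neg (by lia)]
          ring
        rcases lt_trichotomy r b with h | rfl | h
        · rw [levelSum_eq_zero_of_neg q D K L (Or.inr (by lia)),
            gaussBinom_eq_zero_of_lt q (by lia) (by lia : (r : ℤ) < b)]
          ring
        · have := ih (a := r) (r := 0) (by lia) (by lia)
          rw [if_pos rfl, Nat.cast_zero] at this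
          rw [sub_self, this, gaussBinom_self hq0 hq1 (by lia)]
          have h2 := gaussBinom_add_one_add_one hq0 hq1 (2 * D - 1) (r - 1)
          rw [sub_add_cancel, sub_add_cancel] at h2
          rw [show 2 * D - r - 1 + r = 2 * D - 1 by ring]
          field_simp
          linear_combination h2
        · have := ih (a := b) (r := r - b) (by lia) (by lia)
          rw [if_neg (by lia), Nat.cast_sub h.le] at this
          rw [this]
          have hne : qint q ((r : ℤ) - b) ≠ 0 := qint_ne_zero hq0 hq1 (by lia)
          have h2 := gaussBinom_add_one_left hq0 hq1 (r - 1) b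
          rw [sub_add_cancel] at h2
          rw [show 2 * D - ((r : ℤ) - b) - 1 = 2 * D - r - 1 + b by ring,
            show (b : ℤ) + (r - b) - 1 = r - 1 by ring]
          field_simp
          linear_combination -qint q (2 * D) * gaussBinom q (2 * D - r - 1 + b) (b - 1) * h2
      rw [Finset.sum_congr rfl hterm, ← Finset.mul_sum]
      congr 1
      rcases Nat.eq_zero_or_pos a with rfl | ha0
      · simp [gaussBinom_of_neg]
      · exact sum_gaussBinom_saalschuetz hq0 hq1 _ _ ha0 (Nat.lt_succ_self a)

theorem levelWeight_eq_prod_of_strictAnti (q : ℝ) (D : ℤ) {m L : ℕ} {e : Fin m → Fin L}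
    (he : StrictAnti e) {κ : Fin L → ℤ} (hκ : ∀ x ∉ Set.range e, κ x = 0) :
    levelWeight q D κ = ∏ i : Fin m,
      gaussBinom q (2 * D - 2 * ∑ j ∈ Finset.univ.filter (fun j => j < i),
        (((e j : ℤ) + 1) - ((e i : ℤ) + 1)) * κ (e j)) (κ (e i)) := by
  symm
  refine Fintype.prod_of_injective e he.injective _ _ ?_ ?_
  · intro x hx
    rw [hκ x hx, gaussBinom_zero_right]
  · intro i
    congr 3
    rw [Finset.sum_filter]
    refine Fintype.sum_of_injective e he.injective _ _ ?_ ?_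
    · intro y hy
      simp [hκ y hy]
    · intro j
      simp only [he.lt_iff_gt, add_sub_add_right_eq_sub]

/-- Multiplicity functions with exactly `m` occupied levels correspond to strictly decreasing
`m`-tuples of levels with positive multiplicities. -/
theorem sum_strictAnti_eq_sum_levelWeight (q : ℝ) (D : ℤ) {K : ℤ} (hK : 0 ≤ K) (b r : ℤ)
    (m L : ℕ) :
    ∑ p ∈ (Fintype.piFinset (fun _ : Fin m => Finset.Icc (1 : ℤ) L) ×ˢ
        Fintype.piFinset (fun _ : Fin m => Finset.Icc (1 : ℤ) K)).filter
          (fun p => StrictAnti p.1 ∧ ∑ i, p.2 i = b ∧ ∑ i, p.1 i * p.2 i = r),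
      ∏ i : Fin m, gaussBinom q (2 * D - 2 * ∑ j ∈ Finset.univ.filter (fun j => j < i),
        (p.1 j - p.1 i) * p.2 j) (p.2 i) =
    ∑ κ ∈ (Fintype.piFinset (fun _ : Fin L => Finset.Icc (0 : ℤ) K)).filter
        (fun κ => (∑ x, κ x = b ∧ ∑ x : Fin L, ((x : ℤ) + 1) * κ x = r) ∧
          (Finset.univ.filter fun x => κ x ≠ 0).card = m),
      levelWeight q D κ := by
  symm
  have hcard : ∀ κ : Fin L → ℤ, κ ∈ (Fintype.piFinset (fun _ : Fin L =>
      Finset.Icc (0 : ℤ) K)).filter (fun κ => (∑ x, κ x = b ∧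
        ∑ x : Fin L, ((x : ℤ) + 1) * κ x = r) ∧
          (Finset.univ.filter fun x => κ x ≠ 0).card = m) →
      (Finset.univ.filter fun x => κ x ≠ 0).card = m := fun κ h => (Finset.mem_filter.1 h).2.2
  let e : ∀ κ : Fin L → ℤ, (Finset.univ.filter fun x => κ x ≠ 0).card = m → Fin m → Fin L :=
    fun κ h i => (Finset.univ.filter fun x => κ x ≠ 0).orderEmbOfFin h (Fin.rev i)
  have he : ∀ κ h, StrictAnti (e κ h) := fun κ h i j hij => by simpa [e] using hij
  have hrange : ∀ κ h x, x ∈ Set.range (e κ h) ↔ κ x ≠ 0 := by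
    intro κ h x
    have h1 : x ∈ Set.range ((Finset.univ.filter fun x => κ x ≠ 0).orderEmbOfFin h) ↔ κ x ≠ 0 := by
      rw [Finset.range_orderEmbOfFin]
      simp
    rw [← h1]
    constructor
    · rintro ⟨i, rfl⟩
      exact ⟨_, rfl⟩
    · rintro ⟨i, rfl⟩
      exact ⟨Fin.rev i, by simp [e]⟩
  have hoff : ∀ κ h, ∀ x ∉ Set.range (e κ h), κ x = 0 := by
    intro κ h x hx
    rw [hrange] at hx
    simpa using hx
  refine Finset.sum_bij (fun κ h => (fun i => ((e κ (hcard κ h) i : ℕ) : ℤ) + 1,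
    fun i => κ (e κ (hcard κ h) i))) ?_ ?_ ?_ ?_
  · intro κ h
    have hm := hcard κ h
    simp only [Finset.mem_filter, Finset.mem_product, Fintype.mem_piFinset, Finset.mem_Icc] at h ⊢
    obtain ⟨hbox, ⟨hb, hr⟩, -⟩ := h
    refine ⟨⟨fun i => ⟨by lia, ?_⟩, fun i => ⟨?_, (hbox _).2⟩⟩, ?_, ?_, ?_⟩
    · have := (e κ hm i).isLt
      lia
    · have h1 := (hrange κ hm (e κ hm i)).1 ⟨i, rfl⟩
      have h2 := (hbox (e κ hm i)).1
      lia
    · intro i j hij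
      have := he κ hm hij
      rw [Fin.lt_def] at this
      dsimp only
      lia
    · rw [← hb]
      exact Fintype.sum_of_injective _ (he κ hm).injective _ _ (hoff κ hm) fun _ => rfl
    · rw [← hr]
      refine Fintype.sum_of_injective _ (he κ hm).injective _ _ (fun x hx => ?_) fun _ => rfl
      rw [hoff κ hm x hx, mul_zero]
  · intro κ h κ' h' heq
    have hm := hcard κ h
    have hm' := hcard κ' h'
    simp only [Prod.mk.injEq] at heq
    have hee : e κ hm = e κ' hm' := by
      funext i
      have := congrFun heq.1 i
      apply Fin.ext
      lia
    funext x
    by_cases hx : x ∈ Set.range (e κ hm)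
    · obtain ⟨i, rfl⟩ := hx
      have := congrFun heq.2 i
      rw [this, hee]
    · rw [hoff κ hm x hx, hoff κ' hm' x (hee ▸ hx)]
  · rintro ⟨n, k⟩ h
    simp only [Finset.mem_filter, Finset.mem_product, Fintype.mem_piFinset, Finset.mem_Icc] at h
    obtain ⟨⟨hn, hk⟩, hanti, hb, hr⟩ := h
    let f : Fin m → Fin L := fun i => ⟨(n i - 1).toNat, by have := hn i; lia⟩
    have hfn : ∀ i, ((f i : ℕ) : ℤ) + 1 = n i := fun i => by
      have := hn i
      simp only [f]
      lia
    have hf : StrictAnti f := fun i j hij => by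
      have h1 := hanti hij
      have h2 := hfn i
      have h3 := hfn j
      rw [Fin.lt_def]
      lia
    let κ : Fin L → ℤ := fun x => ∑ i, if f i = x then k i else 0
    have hκf : ∀ i, κ (f i) = k i := fun i => by simp [κ, hf.injective.eq_iff]
    have hκ0 : ∀ x ∉ Set.range f, κ x = 0 := fun x hx =>
      Finset.sum_eq_zero fun i _ => if_neg fun h => hx ⟨i, h⟩
    have hsupp : (Finset.univ.filter fun x => κ x ≠ 0) = Finset.univ.image f := by
      ext x
      simp only [Finset.mem_filter, Finset.mem_univ, true_and, Finset.mem_image]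
      constructor
      · intro h
        by_contra hx
        exact h (hκ0 x hx)
      · rintro ⟨i, rfl⟩
        rw [hκf]
        have := hk i
        lia
    have hm : (Finset.univ.filter fun x => κ x ≠ 0).card = m := by
      rw [hsupp, Finset.card_image_of_injective _ hf.injective, Finset.card_univ, Fintype.card_fin]
    have hef : e κ hm = f := by
      have h1 : (fun i => f (Fin.rev i)) = (Finset.univ.filter fun x => κ x ≠ 0).orderEmbOfFin hm :=
        Finset.orderEmbOfFin_unique hm (fun i => by rw [hsupp]; simp)
          fun i j hij => hf (by simpa using hij)
      funext i
      have := congrFun h1 (Fin.rev i)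
      simpa [e] using this.symm
    refine ⟨κ, ?_, ?_⟩
    · simp only [Finset.mem_filter, Fintype.mem_piFinset, Finset.mem_Icc]
      refine ⟨fun x => ?_, ⟨?_, ?_⟩, hm⟩
      · by_cases hx : x ∈ Set.range f
        · obtain ⟨i, rfl⟩ := hx
          rw [hκf]
          have := hk i
          lia
        · rw [hκ0 x hx]
          exact ⟨le_rfl, hK⟩
      · rw [← hb]
        exact (Fintype.sum_of_injective f hf.injective _ _ hκ0 fun i => (hκf i).symm).symm
      · rw [← hr]
        refine (Fintype.sum_of_injective f hf.injective _ _ (fun x hx => ?_) fun i => ?_).symm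
        · rw [hκ0 x hx, mul_zero]
        · rw [hκf, hfn]
    · simp only [hef, hκf, hfn]
  · intro κ h
    exact levelWeight_eq_prod_of_strictAnti q D (he κ (hcard κ h)) (hoff κ (hcard κ h))

/-- Summing over the number of occupied levels turns the sum over strictly decreasing tuples
into `levelSum`. -/
theorem sum_sum_strictAnti_eq_levelSum (q : ℝ) (D : ℤ) {K : ℤ} (hK : 0 ≤ K) (L : ℕ) (b : ℤ)
    {r : ℤ} (hr : 0 < r) :
    ∑ m ∈ Finset.Icc 1 r.toNat,
      ∑ p ∈ (Fintype.piFinset (fun _ : Fin m => Finset.Icc (1 : ℤ) L) ×ˢ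
        Fintype.piFinset (fun _ : Fin m => Finset.Icc (1 : ℤ) K)).filter
          (fun p => StrictAnti p.1 ∧ ∑ i, p.2 i = b ∧ ∑ i, p.1 i * p.2 i = r),
      ∏ i : Fin m, gaussBinom q (2 * D - 2 * ∑ j ∈ Finset.univ.filter (fun j => j < i),
        (p.1 j - p.1 i) * p.2 j) (p.2 i) =
    levelSum q D K L b (r - b) := by
  have hcond : ∀ κ : Fin L → ℤ,
      (∑ x, κ x = b ∧ ∑ x : Fin L, (x : ℤ) * κ x = r - b) ↔
        (∑ x, κ x = b ∧ ∑ x : Fin L, ((x : ℤ) + 1) * κ x = r) := by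
    intro κ
    have : ∑ x : Fin L, ((x : ℤ) + 1) * κ x = ∑ x : Fin L, (x : ℤ) * κ x + ∑ x, κ x := by
      simp [add_mul, Finset.sum_add_distrib]
    lia
  simp only [sum_strictAnti_eq_sum_levelWeight q D hK, levelSum, hcond]
  rw [← Finset.sum_filter]
  simp only [← Finset.filter_filter]
  refine Finset.sum_fiberwise_of_maps_to (fun κ hκ => ?_) _
  simp only [Finset.mem_filter, Fintype.mem_piFinset, Finset.mem_Icc] at hκ
  obtain ⟨⟨hbox, -⟩, hr'⟩ := hκ
  rw [Finset.mem_Icc]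
  constructor
  · rw [Nat.one_le_iff_ne_zero, Finset.card_ne_zero]
    by_contra hne
    rw [Finset.not_nonempty_iff_eq_empty, Finset.filter_eq_empty_iff] at hne
    have : ∑ x : Fin L, ((x : ℤ) + 1) * κ x = 0 := Finset.sum_eq_zero fun x hx => by
      rw [not_not.1 (hne hx), mul_zero]
    lia
  · have h1 : ((Finset.univ.filter fun x => κ x ≠ 0).card : ℤ) ≤
        ∑ x : Fin L, ((x : ℤ) + 1) * κ x := by
      rw [Finset.card_filter, Nat.cast_sum]
      refine Finset.sum_le_sum fun x _ => ?_
      have h2 := (hbox x).1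
      split_ifs with h
      · have h3 : 1 ≤ κ x := by lia
        push_cast
        nlinarith [Int.natCast_nonneg (x : ℕ)]
      · push_cast
        positivity
    lia

/-- Theorem 2 of the paper: for integers `d₀ > d₁ ≥ 1`, the sum over all `m ≥ 1`,
`n₁ > n₂ > ⋯ > n_m > 0`, `k₁, …, k_m > 0`, `k₀ ≥ 0` with `k₀ + k₁ + ⋯ + k_m = d₁` and
`n₁k₁ + ⋯ + n_mk_m = d₀ - d₁` of
`[2d₀ choose k₁]_q [2d₀ - 2(n₁-n₂)k₁ choose k₂]_q ⋯
 [2d₀ - 2∑_{j<m}(n_j-n_m)k_j choose k_m]_q [2d₁ choose k₀]_q`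
equals `([2d₀]_q/[d₀]_q) [d₀ choose d₁]_q [d₀+d₁-1 choose d₀]_q`.
(Each `n_i` satisfies `1 ≤ n_i ≤ d₀ - d₁ ≤ d₀` and each `k_i` satisfies `1 ≤ k_i ≤ d₁ ≤ d₀`,
and `1 ≤ m ≤ d₀ - d₁`, so the finite ranges below lose no terms.) -/
theorem multivariate_qbinomial_sum_dP1 (q : ℝ) (hq0 : 0 < q) (hq1 : q ≠ 1)
    (d0 d1 : ℤ) (hd1 : 1 ≤ d1) (hd0 : d1 < d0) :
    (∑ m ∈ Finset.Icc 1 (d0 - d1).toNat,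
      ∑ k0 ∈ Finset.Icc (0 : ℤ) d1,
        ∑ p ∈ (Fintype.piFinset (fun _ : Fin m => Finset.Icc (1 : ℤ) d0) ×ˢ
               Fintype.piFinset (fun _ : Fin m => Finset.Icc (1 : ℤ) d0)).filter
              (fun p => StrictAnti p.1 ∧ k0 + (∑ i, p.2 i) = d1 ∧
                (∑ i, p.1 i * p.2 i) = d0 - d1),
          (∏ i : Fin m,
            qbinom q
              (2 * d0 - 2 * ∑ j ∈ Finset.univ.filter (fun j => j < i),
                (p.1 j - p.1 i) * p.2 j)
              (p.2 i)) *
            qbinom q (2 * d1) k0)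
    = qint q (2 * d0) / qint q d0 * qbinom q d0 d1 * qbinom q (d0 + d1 - 1) d0 := by
  obtain ⟨L, rfl⟩ := Int.eq_ofNat_of_zero_le (show 0 ≤ d0 by lia)
  obtain ⟨a, rfl⟩ := Int.eq_ofNat_of_zero_le (show 0 ≤ d1 by lia)
  have haL : a < L := by lia
  have hterm : ∀ k0 ∈ Finset.Icc (0 : ℤ) a,
      (∑ m ∈ Finset.Icc 1 ((L : ℤ) - a).toNat,
        ∑ p ∈ (Fintype.piFinset (fun _ : Fin m => Finset.Icc (1 : ℤ) L) ×ˢ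
               Fintype.piFinset (fun _ : Fin m => Finset.Icc (1 : ℤ) L)).filter
              (fun p => StrictAnti p.1 ∧ k0 + (∑ i, p.2 i) = a ∧
                (∑ i, p.1 i * p.2 i) = (L : ℤ) - a),
          (∏ i : Fin m,
            qbinom q
              (2 * L - 2 * ∑ j ∈ Finset.univ.filter (fun j => j < i),
                (p.1 j - p.1 i) * p.2 j)
              (p.2 i)) *
            qbinom q (2 * a) k0) =
      gaussBinom q (2 * L - 2 * (L - a)) k0 *
        levelSum q L L L (a - k0) (L - a - (a - k0)) := by
    intro k0 hk0
    rw [Finset.mem_Icc] at hk0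
    rw [← sum_sum_strictAnti_eq_levelSum q L (by lia) L (a - k0) (by lia), Finset.mul_sum]
    refine Finset.sum_congr rfl fun m _ => ?_
    rw [Finset.mul_sum]
    refine Finset.sum_congr ?_ fun p hp => ?_
    · refine Finset.filter_congr fun p _ => ?_
      rw [eq_sub_iff_add_eq' (c := k0)]
    · simp only [Finset.mem_filter, Finset.mem_product, Fintype.mem_piFinset,
        Finset.mem_Icc] at hp
      obtain ⟨⟨hn, hk⟩, -, -, hr⟩ := hp
      rw [mul_comm, qbinom_eq_gaussBinom q (by lia) hk0.1,
        show 2 * (L : ℤ) - 2 * (L - a) = 2 * a by ring]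
      congr 1
      refine Finset.prod_congr rfl fun i _ => qbinom_eq_gaussBinom q ?_ (by have := hk i; lia)
      have hle : ∑ j ∈ Finset.univ.filter (fun j => j < i), (p.1 j - p.1 i) * p.2 j ≤
          ∑ j, p.1 j * p.2 j := by
        rw [Finset.sum_filter]
        refine Finset.sum_le_sum fun j _ => ?_
        have h1 := (hn j).1
        have h2 := (hn i).1
        have h3 := (hk j).1
        split_ifs
        · nlinarith
        · positivity
      lia
  have hsub : Finset.Icc (0 : ℤ) a ⊆ Finset.Icc (0 : ℤ) L :=
    Finset.Icc_subset_Icc_right (by lia)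
  rw [Finset.sum_comm, Finset.sum_congr rfl hterm, Finset.sum_subset hsub, ← levelSum_succ]
  · have h := levelSum_eq hq0 hq1 (D := L) (K := L) (L + 1) (a := a) (r := L - a) (by lia) (by lia)
    rw [Nat.cast_sub haL.le, if_neg (by lia)] at h
    rw [h, qbinom_eq_gaussBinom q (by lia) (by lia), qbinom_eq_gaussBinom q (by lia) (by lia)]
    have hsymm := gaussBinom_symm hq0 hq1 (a := (a : ℤ) - 1) (b := L) (by lia) (by lia)
    have hleft := gaussBinom_add_one_left hq0 hq1 ((L : ℤ) - 1) a
    rw [sub_add_cancel] at hleft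
    rw [show 2 * (L : ℤ) - (L - a) - 1 = a - 1 + L by ring,
      show (a : ℤ) + (L - a) - 1 = L - 1 by ring,
      show (L : ℤ) + a - 1 = a - 1 + L by ring, hsymm]
    have h1 : qint q L ≠ 0 := qint_ne_zero hq0 hq1 (by lia)
    have h2 : qint q ((L : ℤ) - a) ≠ 0 := qint_ne_zero hq0 hq1 (by lia)
    field_simp
    linear_combination -qint q (2 * L) * gaussBinom q (a - 1 + L) L * hleft
  · intro k hk hk'
    rw [Finset.mem_Icc] at hk hk'
    rw [levelSum_eq_zero_of_neg q L L L (Or.inl (by lia)), mul_zero]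
end

section
/- Let q be a real number with q > 0 and q ≠ 1, and let d_1 and d_2 be integers with d_1 ≥ 1 and d_2 ≥ 1. Then the (finite) sum over all integers m ≥ 1, all integers n_1 > n_2 > … > n_m > 0, and all integers k_1, …, k_m > 0 satisfying n_1 k_1 + … + n_m k_m = d_1, of the product ∏_{i=1}^{m} [d_2 + 2d_1 + 2∑_{j=1}^{i}(n_i − n_j)k_j choose k_i]_q · [d_2 choose ∑_{j=1}^{m} k_j]_q, equals ([2d_1+d_2]_q/[d_2]_q) · ([d_1+d_2−1 choose d_1]_q)^2. -/
attribute [local instance] Classical.propDecidable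

open Finset

/-- The symmetric Gaussian binomial coefficient in the variable `t = q ^ (1/2)`, defined by its
Pascal recursion. -/
noncomputable def symmGauss (t : ℝ) : ℕ → ℕ → ℝ
  | _, 0 => 1
  | 0, _ + 1 => 0
  | n + 1, k + 1 =>
    t ^ ((k : ℤ) + 1) * symmGauss t n (k + 1) + t ^ ((k : ℤ) - n) * symmGauss t n k

/-- The symmetric `q`-integer in the variable `t = q ^ (1/2)`. -/
noncomputable def symmInt (t : ℝ) (a : ℤ) : ℝ := t ^ a - t ^ (-a)

/-- The symmetric `q`-factorial in the variable `t = q ^ (1/2)`. -/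
noncomputable def symmFactorial (t : ℝ) (n : ℕ) : ℝ := ∏ i ∈ range n, symmInt t ((i : ℤ) + 1)

@[simp]
lemma symmGauss_zero_right (t : ℝ) (n : ℕ) : symmGauss t n 0 = 1 := by
  cases n <;> simp [symmGauss]

@[simp]
lemma symmGauss_zero_succ (t : ℝ) (k : ℕ) : symmGauss t 0 (k + 1) = 0 := by
  simp [symmGauss]

lemma symmGauss_succ_succ (t : ℝ) (n k : ℕ) : symmGauss t (n + 1) (k + 1) =
    t ^ ((k : ℤ) + 1) * symmGauss t n (k + 1) + t ^ ((k : ℤ) - n) * symmGauss t n k := by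
  simp [symmGauss]

lemma symmGauss_eq_zero_of_lt (t : ℝ) {n k : ℕ} (h : n < k) : symmGauss t n k = 0 := by
  induction n generalizing k with
  | zero => obtain ⟨k, rfl⟩ := Nat.exists_eq_succ_of_ne_zero h.ne'; simp
  | succ n ih =>
    obtain ⟨k, rfl⟩ := Nat.exists_eq_succ_of_ne_zero (by omega : k ≠ 0)
    rw [Nat.succ_eq_add_one, symmGauss_succ_succ, ih (by omega), ih (by omega)]
    simp

/-- The `q`-Vandermonde identity in symmetric form. -/
lemma symmGauss_vandermonde {t : ℝ} (ht : t ≠ 0) (m n k : ℕ) : symmGauss t (m + n) k =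
    ∑ p ∈ antidiagonal k,
      symmGauss t m p.1 * symmGauss t n p.2 * t ^ ((n : ℤ) * p.1 - m * p.2) := by
  induction n generalizing k with
  | zero =>
    cases k with
    | zero => simp
    | succ k =>
      rw [Finset.Nat.sum_antidiagonal_succ']
      simp
  | succ n ih =>
    cases k with
    | zero => simp
    | succ k =>
      rw [← add_assoc, symmGauss_succ_succ, ih, ih, Finset.Nat.sum_antidiagonal_succ',
        Finset.Nat.sum_antidiagonal_succ', mul_add, mul_sum, mul_sum, add_assoc,
        ← sum_add_distrib]
      refine congrArg₂ _ ?_ (sum_congr rfl fun p hp => ?_)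
      · have e : t ^ ((k : ℤ) + 1) * t ^ ((n : ℤ) * ((k + 1 : ℕ) : ℤ) - m * ((0 : ℕ) : ℤ)) =
            t ^ (((n + 1 : ℕ) : ℤ) * ((k + 1 : ℕ) : ℤ) - m * ((0 : ℕ) : ℤ)) := by
          rw [← zpow_add₀ ht]; congr 1; push_cast; ring
        simp only [symmGauss_zero_right]
        linear_combination symmGauss t m (k + 1) * e
      · have hk : (k : ℤ) = p.1 + p.2 := by
          rw [HasAntidiagonal.mem_antidiagonal] at hp; exact_mod_cast hp.symm
        rw [symmGauss_succ_succ, hk]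
        have e1 : t ^ ((p.1 : ℤ) + p.2 + 1) * t ^ ((n : ℤ) * p.1 - m * ((p.2 + 1 : ℕ) : ℤ)) =
            t ^ ((p.2 : ℤ) + 1) * t ^ (((n + 1 : ℕ) : ℤ) * p.1 - m * ((p.2 + 1 : ℕ) : ℤ)) := by
          rw [← zpow_add₀ ht, ← zpow_add₀ ht]; congr 1; push_cast; ring
        have e2 : t ^ ((p.1 : ℤ) + p.2 - ((m + n : ℕ) : ℤ)) * t ^ ((n : ℤ) * p.1 - m * p.2) =
            t ^ ((p.2 : ℤ) - n) * t ^ (((n + 1 : ℕ) : ℤ) * p.1 - m * ((p.2 + 1 : ℕ) : ℤ)) := by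
          rw [← zpow_add₀ ht, ← zpow_add₀ ht]; congr 1; push_cast; ring
        linear_combination (symmGauss t m p.1 * symmGauss t n (p.2 + 1)) * e1 +
          (symmGauss t m p.1 * symmGauss t n p.2) * e2

lemma symmFactorial_succ (t : ℝ) (n : ℕ) :
    symmFactorial t (n + 1) = symmFactorial t n * symmInt t ((n : ℤ) + 1) := by
  simp [symmFactorial, prod_range_succ]

@[simp]
lemma symmFactorial_zero (t : ℝ) : symmFactorial t 0 = 1 := by
  simp [symmFactorial]

@[simp]
lemma symmGauss_self (t : ℝ) (n : ℕ) : symmGauss t n n = 1 := by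
  induction n with
  | zero => simp
  | succ n ih => rw [symmGauss_succ_succ, symmGauss_eq_zero_of_lt t (Nat.lt_succ_self n), ih]; simp

lemma symmInt_add {t : ℝ} (ht : t ≠ 0) (a b : ℤ) :
    symmInt t (a + b) = t ^ a * symmInt t b + t ^ (-b) * symmInt t a := by
  simp only [symmInt, neg_add, zpow_add₀ ht, zpow_neg]
  ring

lemma symmGauss_mul_factorial {t : ℝ} (ht : t ≠ 0) (a b : ℕ) :
    symmGauss t (a + b) a * (symmFactorial t a * symmFactorial t b) = symmFactorial t (a + b) := by
  induction hs : a + b generalizing a b with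
  | zero =>
    obtain ⟨rfl, rfl⟩ : a = 0 ∧ b = 0 := by omega
    simp
  | succ s ih =>
    cases a with
    | zero =>
      obtain rfl : b = s + 1 := by omega
      simp
    | succ a =>
      cases b with
      | zero =>
        obtain rfl : a = s := by omega
        simp
      | succ b =>
        have h1 := ih (a + 1) b (by omega)
        have h2 := ih a (b + 1) (by omega)
        have hsab : ((s : ℤ) + 1) = ((a : ℤ) + 1) + ((b : ℤ) + 1) := by
          have : (s : ℤ) = a + b + 1 := by exact_mod_cast (by omega : s = a + b + 1)
          rw [this]; ring
        have he : (a : ℤ) - s = -((b : ℤ) + 1) := by linarith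
        rw [symmGauss_succ_succ, symmFactorial_succ t s, hsab, symmInt_add ht, he]
        rw [symmFactorial_succ t a] at h1 ⊢
        rw [symmFactorial_succ t b] at h2 ⊢
        linear_combination t ^ ((a : ℤ) + 1) * symmInt t ((b : ℤ) + 1) * h1 +
          t ^ (-((b : ℤ) + 1)) * symmInt t ((a : ℤ) + 1) * h2

lemma symmInt_ne_zero {t : ℝ} (ht : 0 < t) (ht1 : t ≠ 1) {a : ℤ} (ha : a ≠ 0) :
    symmInt t a ≠ 0 := by
  rw [symmInt, sub_ne_zero]
  intro h
  have := zpow_right_injective₀ ht ht1 h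
  omega

lemma symmFactorial_ne_zero {t : ℝ} (ht : 0 < t) (ht1 : t ≠ 1) (n : ℕ) :
    symmFactorial t n ≠ 0 :=
  prod_ne_zero_iff.2 fun _ _ => symmInt_ne_zero ht ht1 (by omega)

lemma symmGauss_eq_div {t : ℝ} (ht : 0 < t) (ht1 : t ≠ 1) (a b : ℕ) :
    symmGauss t (a + b) a = symmFactorial t (a + b) / (symmFactorial t a * symmFactorial t b) := by
  rw [eq_div_iff (mul_ne_zero (symmFactorial_ne_zero ht ht1 a) (symmFactorial_ne_zero ht ht1 b)),
    symmGauss_mul_factorial ht.ne']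

lemma symmGauss_symm {t : ℝ} (ht : 0 < t) (ht1 : t ≠ 1) (a b : ℕ) :
    symmGauss t (a + b) a = symmGauss t (a + b) b := by
  rw [symmGauss_eq_div ht ht1, add_comm a b, symmGauss_eq_div ht ht1, mul_comm]

lemma symmGauss_mul_symmGauss {t : ℝ} (ht : 0 < t) (ht1 : t ≠ 1) (j p i : ℕ) :
    symmGauss t (j + p) (j + i) * symmGauss t (j + i) j =
      symmGauss t (j + p) j * symmGauss t p i := by
  rcases lt_or_ge p i with h | h
  · rw [symmGauss_eq_zero_of_lt t h, symmGauss_eq_zero_of_lt t (by omega : j + p < j + i)]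
    simp
  · obtain ⟨r, rfl⟩ := Nat.exists_eq_add_of_le h
    have := symmFactorial_ne_zero ht ht1
    rw [symmGauss_eq_div ht ht1 j (i + r), symmGauss_eq_div ht ht1 i r,
      symmGauss_eq_div ht ht1 j i, ← add_assoc, symmGauss_eq_div ht ht1 (j + i) r]
    have h1 := this (j + i)
    have h2 := this (i + r)
    have h3 := this j
    have h4 := this i
    have h5 := this r
    field_simp

lemma symmGauss_succ_mul_symmInt {t : ℝ} (ht : 0 < t) (ht1 : t ≠ 1) (a b : ℕ) :
    symmGauss t (a + b + 1) a * symmInt t ((b : ℤ) + 1) =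
      symmGauss t (a + b) a * symmInt t ((a : ℤ) + b + 1) := by
  have := symmFactorial_ne_zero ht ht1
  have h1 := this a
  have h2 := this b
  have h3 := symmInt_ne_zero ht ht1 (a := (b : ℤ) + 1) (by omega)
  rw [symmGauss_eq_div ht ht1, add_assoc, symmGauss_eq_div ht ht1, ← add_assoc,
    symmFactorial_succ t b, symmFactorial_succ t (a + b)]
  push_cast
  field_simp

lemma sum_antidiagonal_antidiagonal_fst (f : ℕ → ℕ → ℕ → ℝ) (n : ℕ) :
    ∑ x ∈ antidiagonal n, ∑ y ∈ antidiagonal x.1, f y.1 y.2 x.2 =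
      ∑ x ∈ antidiagonal n, ∑ y ∈ antidiagonal x.2, f x.1 y.1 y.2 := by
  rw [sum_sigma', sum_sigma']
  refine sum_bij' (fun x _ => ⟨(x.2.1, x.2.2 + x.1.2), (x.2.2, x.1.2)⟩)
    (fun x _ => ⟨(x.1.1 + x.2.1, x.2.2), (x.1.1, x.2.1)⟩) ?_ ?_ ?_ ?_ ?_
  all_goals
    rintro ⟨⟨a, b⟩, ⟨c, d⟩⟩ h
    simp only [mem_sigma, HasAntidiagonal.mem_antidiagonal] at h
    obtain ⟨h1, h2⟩ := h
    subst h2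
    simp_all [add_assoc]

/-- The `q`-Pfaff–Saalschütz identity in symmetric form. -/
lemma symmGauss_saalschutz {t : ℝ} (ht : 0 < t) (ht1 : t ≠ 1) {P Q n u : ℕ} (v : ℕ)
    (h : P + Q = n + u) :
    ∑ x ∈ antidiagonal n,
      symmGauss t P x.1 * symmGauss t Q x.2 * symmGauss t (u + v + x.1) (P + Q) =
    symmGauss t (u + v) u * symmGauss t (v + P) n := by
  have ht0 := ht.ne'
  have hexp : ∀ x ∈ antidiagonal n,
      symmGauss t P x.1 * symmGauss t Q x.2 * symmGauss t (u + v + x.1) (P + Q) =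
      ∑ y ∈ antidiagonal x.1, symmGauss t P (y.1 + y.2) * symmGauss t Q x.2 *
        (symmGauss t (u + v) (u + (y.2 + x.2)) * symmGauss t (y.1 + y.2) y.1 *
          t ^ (((y.1 : ℤ) + y.2) * ((u : ℤ) + (y.2 + x.2)) - (u + v) * y.1)) := by
    intro x hx
    rw [HasAntidiagonal.mem_antidiagonal] at hx
    rw [symmGauss_vandermonde ht0, ← Finset.Nat.sum_antidiagonal_swap,
      Finset.Nat.sum_antidiagonal_eq_sum_range_succ_mk,
      Finset.Nat.sum_antidiagonal_eq_sum_range_succ_mk, mul_sum]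
    symm
    apply sum_subset_zero_on_sdiff
    · intro i; simp only [mem_range]; omega
    · intro i hi
      simp only [mem_sdiff, mem_range] at hi
      simp only [Prod.swap]
      rw [symmGauss_eq_zero_of_lt t (by omega : x.1 < i)]
      simp
    · intro i hi
      rw [mem_range] at hi
      obtain ⟨c, hc⟩ := Nat.exists_eq_add_of_le (by omega : i ≤ x.1)
      have e1 : x.1 - i = c := by omega
      have e2 : P + Q - i = u + (c + x.2) := by omega
      simp only [Prod.swap, e1, e2]
      rw [← hc]
      congr 3
      push_cast [hc]
      ring
  rw [sum_congr rfl hexp, sum_antidiagonal_antidiagonal_fst (fun j i l =>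
    symmGauss t P (j + i) * symmGauss t Q l * (symmGauss t (u + v) (u + (i + l)) *
      symmGauss t (j + i) j * t ^ (((j : ℤ) + i) * ((u : ℤ) + (i + l)) - (u + v) * j))),
    symmGauss_vandermonde ht0 v P n, mul_sum,
    ← Finset.Nat.sum_antidiagonal_swap]
  refine sum_congr rfl fun x hx => ?_
  rw [HasAntidiagonal.mem_antidiagonal] at hx
  obtain ⟨s, j⟩ := x
  simp only [Prod.swap] at hx ⊢
  rcases lt_or_ge P j with hj | hj
  · rw [symmGauss_eq_zero_of_lt t hj]
    simp only [mul_zero, zero_mul]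
    refine sum_eq_zero fun y _ => ?_
    rw [symmGauss_eq_zero_of_lt t (by omega : P < j + y.1)]
    simp
  obtain ⟨p, rfl⟩ := Nat.exists_eq_add_of_le hj
  have hpQ : p + Q = u + s := by omega
  have hinner : ∀ y ∈ antidiagonal s,
      symmGauss t (j + p) (j + y.1) * symmGauss t Q y.2 * (symmGauss t (u + v) (u + (y.1 + y.2)) *
        symmGauss t (j + y.1) j *
          t ^ (((j : ℤ) + y.1) * ((u : ℤ) + (y.1 + y.2)) - (u + v) * j)) =
      symmGauss t (j + p) j * symmGauss t (u + v) (u + s) *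
        t ^ ((j : ℤ) * s - v * j + p * s) *
        (symmGauss t p y.1 * symmGauss t Q y.2 * t ^ ((Q : ℤ) * y.1 - p * y.2)) := by
    intro y hy
    rw [HasAntidiagonal.mem_antidiagonal] at hy
    have e : t ^ (((j : ℤ) + y.1) * ((u : ℤ) + (y.1 + y.2)) - (u + v) * j) =
        t ^ ((j : ℤ) * s - v * j + p * s) * t ^ ((Q : ℤ) * y.1 - p * y.2) := by
      have hQ : (Q : ℤ) = u + s - p := by
        rw [eq_sub_iff_add_eq, add_comm]; exact_mod_cast hpQ
      have hs : (s : ℤ) = y.1 + y.2 := by exact_mod_cast hy.symm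
      rw [← zpow_add₀ ht0, hQ, hs]; congr 1; ring
    rw [e, hy]
    linear_combination symmGauss t Q y.2 * symmGauss t (u + v) (u + s) *
      t ^ ((j : ℤ) * s - v * j + p * s) * t ^ ((Q : ℤ) * y.1 - p * y.2) *
      symmGauss_mul_symmGauss ht ht1 j p y.1
  rw [sum_congr rfl hinner, ← mul_sum, ← symmGauss_vandermonde ht0, hpQ,
    ← symmGauss_symm ht ht1 u s]
  have e : (((j + p : ℕ) : ℤ) * s - v * j) = (j : ℤ) * s - v * j + p * s := by push_cast; ring
  rw [e]
  linear_combination symmGauss t (j + p) j * t ^ ((j : ℤ) * s - v * j + p * s) *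
    symmGauss_mul_symmGauss ht ht1 u v s

/-- Pairs `(n, k)` of sequences of length `m` of positive integers, with `n` strictly decreasing,
`∑ i, n i * k i = d` and `∑ i, k i = M`. -/
noncomputable def configs (m : ℕ) (d M : ℤ) : Finset ((Fin m → ℤ) × (Fin m → ℤ)) :=
  (Fintype.piFinset (fun _ : Fin m => Finset.Icc (1 : ℤ) d) ×ˢ
    Fintype.piFinset (fun _ : Fin m => Finset.Icc (1 : ℤ) M)).filter
    (fun p => StrictAnti p.1 ∧ (∑ i, p.1 i * p.2 i) = d ∧ ∑ i, p.2 i = M)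

lemma le_sum_of_one_le {m : ℕ} {f : Fin m → ℤ} (hf : ∀ i, 1 ≤ f i) (i : Fin m) :
    f i ≤ ∑ j, f j :=
  single_le_sum (f := f) (fun j _ => zero_le_one.trans (hf j)) (mem_univ i)

lemma mem_configs {m : ℕ} {d M : ℤ} {p : (Fin m → ℤ) × (Fin m → ℤ)} :
    p ∈ configs m d M ↔ (∀ i, 1 ≤ p.1 i) ∧ (∀ i, 1 ≤ p.2 i) ∧ StrictAnti p.1 ∧
      (∑ i, p.1 i * p.2 i) = d ∧ ∑ i, p.2 i = M := by
  simp only [configs, mem_filter, mem_product, Fintype.mem_piFinset, mem_Icc]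
  constructor
  · rintro ⟨⟨h1, h2⟩, h3⟩
    exact ⟨fun i => (h1 i).1, fun i => (h2 i).1, h3⟩
  · rintro ⟨h1, h2, h3, rfl, rfl⟩
    refine ⟨⟨fun i => ⟨h1 i, ?_⟩, fun i => ⟨h2 i, le_sum_of_one_le h2 i⟩⟩, h3, rfl, rfl⟩
    refine le_trans ?_ (le_sum_of_one_le (f := fun j => p.1 j * p.2 j)
      (fun j => one_le_mul_of_one_le_of_one_le (h1 j) (h2 j)) i)
    nlinarith [h1 i, h2 i]

/-- The product of `q`-binomial coefficients attached to a pair of sequences. -/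
noncomputable def configWeight (q : ℝ) (N : ℤ) {m : ℕ} (p : (Fin m → ℤ) × (Fin m → ℤ)) : ℝ :=
  ∏ i : Fin m, qbinom q
    (N + 2 * ∑ j ∈ Finset.univ.filter (fun j => j ≤ i), (p.1 i - p.1 j) * p.2 j) (p.2 i)

/-- The total weight of the pairs of sequences of length `m`. -/
noncomputable def configSum (q : ℝ) (N : ℤ) (m : ℕ) (d M : ℤ) : ℝ :=
  ∑ p ∈ configs m d M, configWeight q N p

lemma configs_eq_empty_of_lt {m : ℕ} (d : ℤ) {M : ℤ} (h : M < m) : configs m d M = ∅ := by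
  refine eq_empty_of_forall_notMem fun p hp => ?_
  obtain ⟨-, h2, -, -, h5⟩ := mem_configs.1 hp
  have := sum_le_sum (s := univ) fun i _ => h2 i
  simp at this
  omega

lemma configs_eq_empty_of_sum_lt (m : ℕ) {d M : ℤ} (h : d < M) : configs m d M = ∅ := by
  refine eq_empty_of_forall_notMem fun p hp => ?_
  obtain ⟨h1, h2, -, h4, h5⟩ := mem_configs.1 hp
  have : ∑ i, p.2 i ≤ ∑ i, p.1 i * p.2 i :=
    sum_le_sum fun i _ => by nlinarith [h1 i, h2 i]
  omega

lemma configSum_zero (q : ℝ) (N d M : ℤ) :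
    configSum q N 0 d M = if d = 0 ∧ M = 0 then 1 else 0 := by
  rw [configSum]
  split_ifs with h
  · obtain ⟨rfl, rfl⟩ := h
    have : configs 0 0 0 = {default} := by
      ext p
      simp [mem_configs, Subsingleton.elim p default, Subsingleton.strictAnti]
    simp [this, configWeight]
  · have : configs 0 d M = ∅ := by
      refine eq_empty_of_forall_notMem fun p hp => h ?_
      obtain ⟨-, -, -, h4, h5⟩ := mem_configs.1 hp
      simp at h4 h5
      exact ⟨h4.symm, h5.symm⟩
    simp [this]

lemma configWeight_sub_one (q : ℝ) (N : ℤ) {m : ℕ} (n k : Fin m → ℤ) :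
    configWeight q N (fun i => n i - 1, k) = configWeight q N (n, k) := by
  simp [configWeight]

lemma configWeight_snoc (q : ℝ) (N : ℤ) {m : ℕ} (n k : Fin m → ℤ) (c : ℤ) :
    configWeight q N
      ((Fin.snoc (fun i => n i + 1) 1 : Fin (m + 1) → ℤ), (Fin.snoc k c : Fin (m + 1) → ℤ)) =
    qbinom q (N - 2 * ∑ i, n i * k i) c * configWeight q N (n, k) := by
  simp only [configWeight, sum_filter]
  rw [Fin.prod_univ_castSucc, mul_comm]
  congr 1
  · simp only [Fin.sum_univ_castSucc, Fin.snoc_castSucc, Fin.snoc_last, Fin.le_last, if_true]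
    congr 1
    simp only [sub_self, zero_mul, add_zero, sub_add_cancel_right, neg_mul, sum_neg_distrib]
    ring
  · refine prod_congr rfl fun i _ => ?_
    simp [Fin.sum_univ_castSucc]

lemma sum_configs_two_le (q : ℝ) (N : ℤ) (m : ℕ) (e M : ℤ) :
    ∑ p ∈ configs (m + 1) (e + M) M with p.1 (Fin.last m) ≠ 1, configWeight q N p =
      configSum q N (m + 1) e M := by
  refine sum_bij' (fun p _ => (fun i => p.1 i - 1, p.2)) (fun p _ => (fun i => p.1 i + 1, p.2))
    ?_ ?_ ?_ ?_ ?_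
  · rintro ⟨n, k⟩ hp
    simp only [mem_filter, mem_configs, sub_mul, one_mul, sum_sub_distrib] at hp ⊢
    obtain ⟨⟨h1, h2, h3, h4, h5⟩, h6⟩ := hp
    refine ⟨fun i => ?_, h2, fun i j hij => ?_, by omega, h5⟩
    · have := h3.antitone (Fin.le_last i)
      have := h1 (Fin.last m)
      omega
    · have := h3 hij
      simp only
      omega
  · rintro ⟨n, k⟩ hp
    simp only [mem_filter, mem_configs, add_mul, one_mul, sum_add_distrib] at hp ⊢
    obtain ⟨h1, h2, h3, h4, h5⟩ := hp
    refine ⟨⟨fun i => ?_, h2, fun i j hij => ?_, by omega, h5⟩, ?_⟩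
    · have := h1 i
      omega
    · have := h3 hij
      simp only
      omega
    · have := h1 (Fin.last m)
      omega
  · simp
  · simp
  · rintro ⟨n, k⟩ -
    exact (configWeight_sub_one q N n k).symm

lemma sum_configs_eq_one (q : ℝ) (N : ℤ) (m : ℕ) (e M : ℤ) :
    ∑ p ∈ configs (m + 1) (e + M) M with p.1 (Fin.last m) = 1, configWeight q N p =
      ∑ k ∈ Finset.Icc 1 M, qbinom q (N - 2 * e) k * configSum q N m e (M - k) := by
  simp only [configSum, mul_sum]
  rw [sum_sigma']
  refine sum_bij' (fun p _ => ⟨p.2 (Fin.last m), (fun i => p.1 i.castSucc - 1,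
      fun i => p.2 i.castSucc)⟩)
    (fun x _ => ((Fin.snoc (fun i => x.2.1 i + 1) 1 : Fin (m + 1) → ℤ),
      (Fin.snoc x.2.2 x.1 : Fin (m + 1) → ℤ))) ?_ ?_ ?_ ?_ ?_
  · rintro ⟨n, k⟩ hp
    simp only [mem_filter, mem_configs, mem_sigma, mem_Icc, sub_mul, one_mul,
      sum_sub_distrib] at hp ⊢
    obtain ⟨⟨h1, h2, h3, h4, h5⟩, h6⟩ := hp
    have hle := le_sum_of_one_le h2 (Fin.last m)
    rw [Fin.sum_univ_castSucc] at h4 h5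
    rw [h6] at h4
    refine ⟨⟨h2 _, by rwa [Fin.sum_univ_castSucc, h5] at hle⟩, fun i => ?_, fun i => h2 _,
      fun i j hij => ?_, by omega, by omega⟩
    · have := h3 (Fin.castSucc_lt_last i)
      omega
    · have := h3 (Fin.castSucc_lt_castSucc_iff.2 hij)
      simp only
      omega
  · rintro ⟨c, n, k⟩ hp
    simp only [mem_filter, mem_configs, mem_sigma, mem_Icc] at hp ⊢
    obtain ⟨⟨h1, h2⟩, h3, h4, h5, h6, h7⟩ := hp
    refine ⟨⟨fun i => ?_, fun i => ?_, fun i j hij => ?_, ?_, ?_⟩, by simp⟩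
    · refine Fin.lastCases ?_ (fun i => ?_) i
      · simp
      · have := h3 i
        simp only [Fin.snoc_castSucc]
        omega
    · refine Fin.lastCases ?_ (fun i => ?_) i
      · simpa using h1
      · simpa using h4 i
    · revert hij
      refine Fin.lastCases (fun hij => ?_) (fun i => ?_) i
      · exact absurd (Fin.le_last j) (not_le.2 hij)
      · refine Fin.lastCases (fun _ => ?_) (fun j hij => ?_) j
        · have := h3 i
          simp only [Fin.snoc_castSucc, Fin.snoc_last]
          omega
        · have := h5 (Fin.castSucc_lt_castSucc_iff.1 hij)
          simp only [Fin.snoc_castSucc]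
          omega
    · simp only [Fin.sum_univ_castSucc, Fin.snoc_castSucc, Fin.snoc_last, add_mul, one_mul,
        sum_add_distrib]
      omega
    · simp only [Fin.sum_univ_castSucc, Fin.snoc_castSucc, Fin.snoc_last]
      omega
  · rintro ⟨n, k⟩ hp
    have h6 := (mem_filter.1 hp).2
    ext i
    · refine Fin.lastCases ?_ (fun i => ?_) i
      · simpa using h6.symm
      · simp
    · refine Fin.lastCases ?_ (fun i => ?_) i <;> simp
  · rintro ⟨c, n, k⟩ -
    simp
  · rintro ⟨n, k⟩ hp
    simp only [mem_filter, mem_configs] at hp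
    obtain ⟨⟨-, -, -, h4, h5⟩, h6⟩ := hp
    rw [Fin.sum_univ_castSucc] at h4 h5
    rw [h6] at h4
    have hsum : ∑ i : Fin m, (n i.castSucc - 1) * k i.castSucc = e := by
      simp only [sub_mul, one_mul, sum_sub_distrib]
      omega
    have hw := configWeight_snoc q N (fun i => n i.castSucc - 1) (fun i => k i.castSucc)
      (k (Fin.last m))
    rw [hsum] at hw
    rw [← hw]
    congr 1
    ext i
    · refine Fin.lastCases ?_ (fun i => ?_) i
      · simpa using h6
      · simp
    · refine Fin.lastCases ?_ (fun i => ?_) i <;> simp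

lemma configSum_succ (q : ℝ) (N : ℤ) (m : ℕ) (e M : ℤ) :
    configSum q N (m + 1) (e + M) M = configSum q N (m + 1) e M +
      ∑ k ∈ Finset.Icc 1 M, qbinom q (N - 2 * e) k * configSum q N m e (M - k) := by
  rw [← sum_configs_two_le q N m e M, ← sum_configs_eq_one, add_comm (Finset.sum _ _), configSum]
  exact (sum_filter_add_sum_filter_not (configs (m + 1) (e + M) M)
    (fun p => p.1 (Fin.last m) = 1) _).symm

lemma sum_range_configSum_succ (q : ℝ) (N : ℤ) (R : ℕ) (e : ℤ) {M : ℤ} (hM : M ≠ 0) :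
    ∑ m ∈ range (R + 1), configSum q N m (e + M) M =
      ∑ m ∈ range (R + 1), configSum q N m e M +
      ∑ k ∈ Finset.Icc 1 M, qbinom q (N - 2 * e) k *
        ∑ m ∈ range R, configSum q N m e (M - k) := by
  simp only [sum_range_succ', configSum_succ, sum_add_distrib, configSum_zero, hM, and_false,
    if_false, add_zero, mul_sum]
  rw [sum_comm (s := range R)]

lemma qint_eq_symmInt {q : ℝ} (hq : 0 < q) (a : ℤ) :
    qint q a = symmInt (q ^ (1 / 2 : ℝ)) a := by
  rw [qint, symmInt, ← Real.rpow_intCast, ← Real.rpow_intCast, ← Real.rpow_mul hq.le,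
    ← Real.rpow_mul hq.le]
  congr 2 <;> push_cast <;> ring

lemma rpow_half_ne_one {q : ℝ} (hq1 : q ≠ 1) : q ^ (1 / 2 : ℝ) ≠ 1 := by
  rw [← Real.sqrt_eq_rpow]
  simpa [Real.sqrt_eq_one] using hq1

lemma symmFactorial_mul_prod (t : ℝ) (b k : ℕ) :
    symmFactorial t b * ∏ i ∈ range k, symmInt t (((k + b : ℕ) : ℤ) - i) =
      symmFactorial t (k + b) := by
  induction k with
  | zero => simp
  | succ k ih =>
    rw [prod_range_succ', add_right_comm, symmFactorial_succ, ← ih]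
    push_cast
    simp only [add_sub_add_right_eq_sub, sub_zero, mul_assoc]

lemma qbinom_natCast {q : ℝ} (hq0 : 0 < q) (hq1 : q ≠ 1) (n k : ℕ) :
    qbinom q n k = symmGauss (q ^ (1 / 2 : ℝ)) n k := by
  have ht := Real.rpow_pos_of_pos hq0 (1 / 2)
  have ht1 := rpow_half_ne_one hq1
  rw [qbinom]
  simp only [qint_eq_symmInt hq0]
  set t := q ^ (1 / 2 : ℝ)
  split_ifs with h
  · obtain ⟨b, rfl⟩ := Nat.exists_eq_add_of_le (by omega : k ≤ n)
    have hb := symmFactorial_ne_zero ht ht1 b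
    have hk := symmFactorial_ne_zero ht ht1 k
    have h1 := symmFactorial_mul_prod t b k
    have h2 := symmFactorial_mul_prod t 0 k
    rw [symmFactorial_zero, one_mul, add_zero] at h2
    rw [Int.toNat_natCast, h2, symmGauss_eq_div ht ht1, ← h1]
    field_simp
  · rw [symmGauss_eq_zero_of_lt _ (by omega)]

lemma sum_Icc_one_natCast (f : ℤ → ℝ) (M : ℕ) :
    ∑ k ∈ Finset.Icc 1 (M : ℤ), f k = ∑ i ∈ range M, f ((i : ℤ) + 1) := by
  refine sum_bij' (fun k _ => (k - 1).toNat) (fun i _ => (i : ℤ) + 1) ?_ ?_ ?_ ?_ ?_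
  · intro k hk; simp only [mem_Icc, mem_range] at hk ⊢; omega
  · intro k hk; simp only [mem_Icc, mem_range] at hk ⊢; omega
  · intro k hk; simp only [mem_Icc] at hk; omega
  · intro k hk; omega
  · intro k hk
    simp only [mem_Icc] at hk
    congr 1
    omega

lemma configSum_eq_zero_of_sum_lt (q : ℝ) (N : ℤ) (m : ℕ) {d M : ℤ} (h : d < M) :
    configSum q N m d M = 0 := by
  rw [configSum, configs_eq_empty_of_sum_lt m h, sum_empty]

lemma configSum_eq_zero_of_lt (q : ℝ) (N : ℤ) {m : ℕ} (d : ℤ) {M : ℤ} (h : M < m) :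
    configSum q N m d M = 0 := by
  rw [configSum, configs_eq_empty_of_lt d h, sum_empty]

lemma sum_range_configSum_zero_right (q : ℝ) (N : ℤ) (R : ℕ) (d : ℤ) :
    ∑ m ∈ range (R + 1), configSum q N m d 0 = if d = 0 then 1 else 0 := by
  rw [sum_range_succ', configSum_zero,
    sum_eq_zero fun m _ => configSum_eq_zero_of_lt q N d (by omega)]
  simp

/-- The sum over all lengths at equal `d` and `M`, where only `n = 1`, `k = M` contributes. -/
lemma sum_range_configSum_self {q : ℝ} (hq0 : 0 < q) (hq1 : q ≠ 1) (N v R : ℕ)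
    (hR : v < R) :
    ∑ m ∈ range (R + 1), configSum q N m ((v + 1 : ℕ) : ℤ) ((v + 1 : ℕ) : ℤ) =
      symmGauss (q ^ (1 / 2 : ℝ)) N (v + 1) := by
  obtain ⟨R, rfl⟩ := Nat.exists_eq_succ_of_ne_zero (by omega : R ≠ 0)
  have h := sum_range_configSum_succ q N (R + 1) 0 (M := ((v + 1 : ℕ) : ℤ)) (by omega)
  rw [zero_add] at h
  rw [h, sum_eq_zero fun m _ => configSum_eq_zero_of_sum_lt q N m (by omega), zero_add,
    sum_Icc_one_natCast, sum_range_succ, sum_eq_zero, zero_add]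
  · have e : (((v + 1 : ℕ) : ℤ) - (v + 1)) = 0 := by push_cast; ring
    rw [e, sum_range_configSum_zero_right, if_pos rfl, mul_one, ← qbinom_natCast hq0 hq1]
    congr 1
  · intro k hk
    rw [mem_range] at hk
    rw [sum_eq_zero fun m _ => configSum_eq_zero_of_sum_lt q N m (by omega), mul_zero]

/-- Closed form for the sum over all lengths. -/
lemma sum_range_configSum {q : ℝ} (hq0 : 0 < q) (hq1 : q ≠ 1) {d : ℕ} (hd : 0 < d) (a : ℕ)
    {M R : ℕ} (hR : M < R) :
    ∑ m ∈ range R, configSum q ((a : ℤ) + 2 * d) m d M =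
      symmInt (q ^ (1 / 2 : ℝ)) ((a : ℤ) + 2 * d) / symmInt (q ^ (1 / 2 : ℝ)) d *
        (symmGauss (q ^ (1 / 2 : ℝ)) d M *
          symmGauss (q ^ (1 / 2 : ℝ)) (a + d + M - 1) (a + d)) := by
  have ht := Real.rpow_pos_of_pos hq0 (1 / 2)
  have ht1 := rpow_half_ne_one hq1
  set t := q ^ (1 / 2 : ℝ) with htq
  induction d using Nat.strong_induction_on generalizing a M R with
  | _ d ih =>
  obtain ⟨R, rfl⟩ := Nat.exists_eq_succ_of_ne_zero (by omega : R ≠ 0)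
  rcases Nat.eq_zero_or_pos M with rfl | hM
  · rw [symmGauss_eq_zero_of_lt t (by omega : a + d + 0 - 1 < a + d), Nat.cast_zero,
      sum_range_configSum_zero_right, if_neg (by omega)]
    simp
  obtain ⟨v, rfl⟩ := Nat.exists_eq_add_of_le' hM
  rcases lt_or_ge d (v + 1) with hdM | hdM
  · rw [symmGauss_eq_zero_of_lt t hdM,
      sum_eq_zero fun m _ => configSum_eq_zero_of_sum_lt q _ m (by omega)]
    simp
  obtain ⟨e, rfl⟩ := Nat.exists_eq_add_of_le' hdM
  have hne : ∀ b : ℕ, symmInt t ((b : ℤ) + 1) ≠ 0 := fun b => symmInt_ne_zero ht ht1 (by omega)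
  rcases Nat.eq_zero_or_pos e with rfl | he
  · have hN : (a : ℤ) + 2 * ((0 + (v + 1) : ℕ) : ℤ) = ((a + v + 1 + v + 1 : ℕ) : ℤ) := by
      push_cast; ring
    rw [hN, zero_add, sum_range_configSum_self hq0 hq1 _ _ _ (by omega), ← htq, symmGauss_self,
      one_mul, (by omega : a + v + 1 + v + 1 = v + 1 + (a + v + 1)), symmGauss_symm ht ht1,
      (by omega : v + 1 + (a + v + 1) = a + v + 1 + v + 1),
      (by omega : a + (v + 1) + (v + 1) - 1 = a + v + 1 + v), ← add_assoc a v 1,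
      eq_comm, div_mul_eq_mul_div, div_eq_iff (by exact_mod_cast hne v)]
    have := symmGauss_succ_mul_symmInt ht ht1 (a + v + 1) v
    push_cast at this ⊢
    rw [this, mul_comm]
  · have hN : (a : ℤ) + 2 * ((e + (v + 1) : ℕ) : ℤ) =
        ((a + 2 * (v + 1) : ℕ) : ℤ) + 2 * e := by push_cast; ring
    have hlt : e < e + (v + 1) := by omega
    have hN' : ((a + 2 * (v + 1) : ℕ) : ℤ) + 2 * e - 2 * e = ((a + 2 * (v + 1) : ℕ) : ℤ) := by
      ring
    have hsaal := symmGauss_saalschutz ht ht1 (P := e) (Q := a + 2 * (v + 1)) (n := v + 1)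
      (u := a + e + (v + 1)) v (by ring)
    rw [← Finset.Nat.sum_antidiagonal_swap, Finset.Nat.sum_antidiagonal_eq_sum_range_succ_mk,
      Nat.succ_eq_add_one, sum_range_succ'] at hsaal
    have hterm : ∀ k ∈ range (v + 1),
        qbinom q (((a + 2 * (v + 1) : ℕ) : ℤ) + 2 * e - 2 * e) ((k : ℤ) + 1) *
          ∑ m ∈ range R, configSum q (((a + 2 * (v + 1) : ℕ) : ℤ) + 2 * e) m e
            (((v + 1 : ℕ) : ℤ) - ((k : ℤ) + 1)) =
        symmInt t (((a + 2 * (v + 1) : ℕ) : ℤ) + 2 * e) / symmInt t e *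
          (symmGauss t e (v + 1 - (k + 1)) * symmGauss t (a + 2 * (v + 1)) (k + 1) *
            symmGauss t (a + e + (v + 1) + v + (v + 1 - (k + 1))) (e + (a + 2 * (v + 1)))) := by
      intro k hk
      rw [mem_range] at hk
      have hc : (((v + 1 : ℕ) : ℤ) - ((k : ℤ) + 1)) = ((v + 1 - (k + 1) : ℕ) : ℤ) := by omega
      rw [hc, ih e hlt he (a + 2 * (v + 1)) (by omega), hN',
        (by push_cast; rfl : (k : ℤ) + 1 = ((k + 1 : ℕ) : ℤ)), qbinom_natCast hq0 hq1, ← htq,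
        (by omega : a + e + (v + 1) + v + (v + 1 - (k + 1)) =
          a + 2 * (v + 1) + e + (v + 1 - (k + 1)) - 1), add_comm e (a + 2 * (v + 1))]
      ring
    rw [hN, Nat.cast_add e (v + 1), sum_range_configSum_succ q _ R e (by omega),
      ih e hlt he (a + 2 * (v + 1)) hR, sum_Icc_one_natCast, sum_congr rfl hterm, ← mul_sum,
      ← mul_add]
    simp only [Prod.swap, tsub_zero, symmGauss_zero_right, mul_one] at hsaal
    rw [(by omega : a + 2 * (v + 1) + e + (v + 1) - 1 = a + e + (v + 1) + v + (v + 1)),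
      add_comm (a + 2 * (v + 1)) e, add_comm (symmGauss t e (v + 1) * _), hsaal,
      (by omega : a + (e + (v + 1)) + (v + 1) - 1 = a + e + (v + 1) + v), ← add_assoc a e (v + 1)]
    obtain ⟨c, rfl⟩ := Nat.exists_eq_add_of_le' he
    have h := symmGauss_succ_mul_symmInt ht ht1 (v + 1) c
    have h1 := hne c
    have h2 := hne (v + 1 + c)
    rw [(by omega : v + (c + 1) = v + 1 + c), (by omega : c + 1 + (v + 1) = v + 1 + c + 1)]
    push_cast at h h1 h2 ⊢
    have e1 : (c : ℤ) + 1 + (v + 1) = v + 1 + c + 1 := by ring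
    rw [e1, div_mul_eq_mul_div, div_mul_eq_mul_div, div_eq_div_iff h1 h2]
    linear_combination (-(symmInt t ((a : ℤ) + 2 * (v + 1) + 2 * (c + 1)) *
      symmGauss t (a + (c + 1) + (v + 1) + v) (a + (c + 1) + (v + 1)))) * h

/-- The special case of the `q`-Pfaff–Saalschütz identity summing to two binomial coefficients with
the same upper entry. -/
lemma sum_range_symmGauss_mul {t : ℝ} (ht : 0 < t) (ht1 : t ≠ 1) (a d : ℕ) :
    ∑ M ∈ range (d + 1),
      symmGauss t d M * symmGauss t (a + 1) M * symmGauss t (d + a + M) (d + (a + 1)) =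
    symmGauss t (d + a) d * symmGauss t (d + a) (a + 1) := by
  have h := symmGauss_saalschutz ht ht1 (P := d) (Q := a + 1) (n := a + 1) (u := d) a (by ring)
  rw [add_comm a d, Finset.Nat.sum_antidiagonal_eq_sum_range_succ_mk] at h
  rw [← h]
  have key : ∀ K, d ≤ K ∨ a + 1 ≤ K → ∑ M ∈ range (K + 1),
      symmGauss t d M * symmGauss t (a + 1) M * symmGauss t (d + a + M) (d + (a + 1)) =
      ∑ M ∈ range (min d (a + 1) + 1),
        symmGauss t d M * symmGauss t (a + 1) M * symmGauss t (d + a + M) (d + (a + 1)) := by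
    intro K hK
    symm
    refine sum_subset (fun M => by simp only [mem_range]; omega) fun M _ hM => ?_
    rcases (by simp only [mem_range] at hM; omega : d < M ∨ a + 1 < M) with h | h <;>
      simp [symmGauss_eq_zero_of_lt t h]
  rw [key d (.inl le_rfl), ← key (a + 1) (.inr le_rfl)]
  refine sum_congr rfl fun M hM => ?_
  rw [mem_range] at hM
  obtain ⟨c, hc⟩ := Nat.exists_eq_add_of_le (by omega : M ≤ a + 1)
  simp only
  rw [(by omega : a + 1 - M = c), hc, symmGauss_symm ht ht1 M c]

lemma symmGauss_succ_right_mul_symmInt {t : ℝ} (ht : 0 < t) (ht1 : t ≠ 1) (d a : ℕ) :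
    symmGauss t (d + 1 + a) (d + 1) * symmInt t ((d : ℤ) + 1) =
      symmGauss t (d + 1 + a) (a + 1) * symmInt t ((a : ℤ) + 1) := by
  have h1 := symmGauss_succ_mul_symmInt ht ht1 a d
  have h2 := symmGauss_succ_mul_symmInt ht ht1 d a
  rw [add_assoc, symmGauss_symm ht ht1 a (d + 1), symmGauss_symm ht ht1 a d] at h1
  rw [add_assoc, symmGauss_symm ht ht1 d (a + 1)] at h2
  rw [(by omega : d + 1 + a = a + (d + 1)), h1, (by omega : a + (d + 1) = d + (a + 1)), h2,
    add_comm a d, add_comm (a : ℤ) d]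

/-- Theorem 3 of the paper: for integers `d₁ ≥ 1` and `d₂ ≥ 1`, the sum over all `m ≥ 1`,
`n₁ > n₂ > ⋯ > n_m > 0`, `k₁, …, k_m > 0` with `n₁k₁ + ⋯ + n_mk_m = d₁` of
`∏_{i=1}^m [d₂ + 2d₁ + 2∑_{j≤i}(n_i-n_j)k_j choose k_i]_q · [d₂ choose ∑_j k_j]_q`
equals `([2d₁+d₂]_q/[d₂]_q) ([d₁+d₂-1 choose d₁]_q)²`.
(Each `n_i`, `k_i` satisfies `1 ≤ n_i, k_i ≤ d₁` and `1 ≤ m ≤ d₁`, so the finite ranges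
below lose no terms.) -/
theorem multivariate_qbinomial_sum_F0 (q : ℝ) (hq0 : 0 < q) (hq1 : q ≠ 1)
    (d1 d2 : ℤ) (hd1 : 1 ≤ d1) (hd2 : 1 ≤ d2) :
    (∑ m ∈ Finset.Icc 1 d1.toNat,
      ∑ p ∈ (Fintype.piFinset (fun _ : Fin m => Finset.Icc (1 : ℤ) d1) ×ˢ
             Fintype.piFinset (fun _ : Fin m => Finset.Icc (1 : ℤ) d1)).filter
            (fun p => StrictAnti p.1 ∧ (∑ i, p.1 i * p.2 i) = d1),
        (∏ i : Fin m,
          qbinom q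
            (d2 + 2 * d1 + 2 * ∑ j ∈ Finset.univ.filter (fun j => j ≤ i),
              (p.1 i - p.1 j) * p.2 j)
            (p.2 i)) *
          qbinom q d2 (∑ j, p.2 j))
    = qint q (2 * d1 + d2) / qint q d2 * (qbinom q (d1 + d2 - 1) d1) ^ 2 := by
  lift d1 to ℕ using by omega
  lift d2 to ℕ using by omega
  norm_cast at hd1 hd2
  obtain ⟨a, rfl⟩ := Nat.exists_eq_add_of_le' hd2
  have ht := Real.rpow_pos_of_pos hq0 (1 / 2)
  have ht1 := rpow_half_ne_one hq1
  set t := q ^ (1 / 2 : ℝ) with htq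
  have hinner : ∀ m ∈ Finset.Icc 1 d1,
      (∑ p ∈ (Fintype.piFinset (fun _ : Fin m => Finset.Icc (1 : ℤ) d1) ×ˢ
             Fintype.piFinset (fun _ : Fin m => Finset.Icc (1 : ℤ) d1)).filter
            (fun p => StrictAnti p.1 ∧ (∑ i, p.1 i * p.2 i) = (d1 : ℤ)),
        configWeight q (((a + 1 : ℕ) : ℤ) + 2 * d1) p *
          qbinom q ((a + 1 : ℕ) : ℤ) (∑ j, p.2 j)) =
      ∑ M ∈ range (d1 + 1), configSum q (((a + 1 : ℕ) : ℤ) + 2 * d1) m d1 (M : ℤ) *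
        qbinom q ((a + 1 : ℕ) : ℤ) M := by
    intro m _
    rw [← sum_fiberwise_of_maps_to (t := range (d1 + 1)) (g := fun p => (∑ j, p.2 j).toNat)]
    · refine sum_congr rfl fun M hM => ?_
      rw [configSum, sum_mul]
      refine sum_congr ?_ fun p hp => ?_
      · ext p
        rw [mem_configs]
        simp only [mem_filter, mem_product, Fintype.mem_piFinset, mem_Icc]
        constructor
        · rintro ⟨⟨⟨h1, h2⟩, h3, h4⟩, h5⟩
          have : 0 ≤ ∑ j, p.2 j := sum_nonneg fun j _ => zero_le_one.trans (h2 j).1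
          exact ⟨fun i => (h1 i).1, fun i => (h2 i).1, h3, h4, by omega⟩
        · rintro ⟨h1, h2, h3, h4, h5⟩
          have hM' : (M : ℤ) ≤ d1 := by rw [mem_range] at hM; omega
          have hp := mem_configs.2 ⟨h1, h2, h3, h4, h5⟩
          simp only [configs, mem_filter, mem_product, Fintype.mem_piFinset, mem_Icc] at hp
          exact ⟨⟨⟨hp.1.1, fun i => ⟨h2 i, (hp.1.2 i).2.trans hM'⟩⟩, h3, h4⟩, by omega⟩
      · rw [(mem_configs.1 hp).2.2.2.2]
    · intro p hp
      simp only [mem_filter, mem_product, Fintype.mem_piFinset, mem_Icc] at hp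
      obtain ⟨⟨h1, h2⟩, h3, h4⟩ := hp
      have : ∑ i, p.2 i ≤ ∑ i, p.1 i * p.2 i :=
        sum_le_sum fun i _ => by nlinarith [(h1 i).1, (h2 i).1]
      simp only [mem_range]
      omega
  have houter : ∀ M ∈ range (d1 + 1),
      ∑ m ∈ Finset.Icc 1 d1, configSum q (((a + 1 : ℕ) : ℤ) + 2 * d1) m d1 (M : ℤ) *
        qbinom q ((a + 1 : ℕ) : ℤ) M =
      symmInt t (((a + 1 : ℕ) : ℤ) + 2 * d1) / symmInt t d1 *
        (symmGauss t d1 M * symmGauss t (a + 1) M * symmGauss t (d1 + a + M) (d1 + (a + 1))) := by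
    intro M hM
    rw [← sum_mul, qbinom_natCast hq0 hq1]
    have hsum : ∑ m ∈ Finset.Icc 1 d1, configSum q (((a + 1 : ℕ) : ℤ) + 2 * d1) m d1 (M : ℤ) =
        ∑ m ∈ range (d1 + 1), configSum q (((a + 1 : ℕ) : ℤ) + 2 * d1) m d1 (M : ℤ) := by
      refine sum_subset (fun m => by simp only [mem_Icc, mem_range]; omega) fun m hm hm' => ?_
      obtain rfl : m = 0 := by simp only [mem_Icc, mem_range] at hm hm'; omega
      rw [configSum_zero, if_neg (by omega)]
    rw [hsum, sum_range_configSum hq0 hq1 hd1 _ (mem_range.1 hM),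
      (by omega : a + 1 + d1 + M - 1 = d1 + a + M), (by omega : a + 1 + d1 = d1 + (a + 1))]
    ring
  have hlhs := sum_congr rfl hinner
  rw [sum_comm, sum_congr rfl houter, ← mul_sum] at hlhs
  simp only [configWeight] at hlhs
  rw [Int.toNat_natCast, hlhs]
  have hsaal : ∑ M ∈ range (d1 + 1),
      symmGauss t d1 M * symmGauss t (a + 1) M * symmGauss t (d1 + a + M) (d1 + (a + 1)) =
      symmGauss t (d1 + a) d1 * symmGauss t (d1 + a) (a + 1) := by
    exact sum_range_symmGauss_mul ht ht1 a d1
  have hb : (d1 : ℤ) + ((a + 1 : ℕ) : ℤ) - 1 = ((d1 + a : ℕ) : ℤ) := by push_cast; ring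
  rw [hsaal, hb, qbinom_natCast hq0 hq1, qint_eq_symmInt hq0, qint_eq_symmInt hq0, ← htq,
    add_comm (2 * (d1 : ℤ))]
  obtain ⟨d, rfl⟩ := Nat.exists_eq_add_of_le' hd1
  have hda := symmGauss_succ_right_mul_symmInt ht ht1 d a
  have h1 : symmInt t ((d : ℤ) + 1) ≠ 0 := symmInt_ne_zero ht ht1 (by omega)
  have h2 : symmInt t ((a : ℤ) + 1) ≠ 0 := symmInt_ne_zero ht ht1 (by omega)
  push_cast
  rw [div_mul_eq_mul_div, div_mul_eq_mul_div, div_eq_div_iff h1 h2]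
  linear_combination (-(symmInt t ((a : ℤ) + 1 + 2 * (d + 1)) *
    symmGauss t (d + 1 + a) (d + 1))) * hda
end

section
/- Let q be a real number with q > 0 and q ≠ 1, let k_0 and d_1 be integers with 1 ≤ k_0 ≤ d_1, and let d_0 be an arbitrary integer. With f(d_0, d, k) defined as the sum over all integers m ≥ 1, n_1 > … > n_m > 0 and k_1, …, k_m > 0 with k_1 + … + k_m = k and n_1 k_1 + … + n_m k_m = d of ∏_{i=1}^{m} [2d_0 − 2∑_{j=1}^{i−1}(n_j − n_i)k_j choose k_i]_q (so in particular f(d_0, 0, 0) = 1 and f(d_0, d, 0) = 0 for d ≥ 1), the following recursion holds: f(d_0, d_1, k_0) = ∑_{k=1}^{k_0} ∑_{n=1}^{⌊d_1/k_0⌋} f(d_0, d_1 − n k_0, k_0 − k) · [2d_0 − 2d_1 + 2 n k_0 choose k]_q, obtained by classifying the terms of f according to the smallest part n_m = n and the corresponding multiplicity k_m = k. -/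
attribute [local instance] Classical.propDecidable

/-- `f(d0, d, k0)`: the sum over all `m`, `n_1 > n_2 > ⋯ > n_m > 0`,
`k_1, …, k_m > 0` with `k_1 + ⋯ + k_m = k0` and `n_1 k_1 + ⋯ + n_m k_m = d` of
`∏_{i=1}^m [2 d0 - 2 ∑_{j<i} (n_j - n_i) k_j choose k_i]_q`, where the empty
sequence `m = 0` is allowed (contributing an empty product `1` exactly when
`d = 0` and `k0 = 0`); hence in particular `f(d0, 0, 0) = 1` and
`f(d0, d, 0) = 0` for `d ≥ 1`, while for `k0 ≥ 1` only terms with `m ≥ 1` occur.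
(Each `n_i`, `k_i` satisfies `1 ≤ n_i, k_i ≤ d` and `m ≤ d`, so the finite ranges
below lose no terms.) -/
noncomputable def f (q : ℝ) (d0 d k0 : ℤ) : ℝ :=
  ∑ m ∈ Finset.range (d.toNat + 1),
    ∑ p ∈ (Fintype.piFinset (fun _ : Fin m => Finset.Icc (1 : ℤ) d) ×ˢ
           Fintype.piFinset (fun _ : Fin m => Finset.Icc (1 : ℤ) d)).filter
          (fun p => StrictAnti p.1 ∧ (∑ i, p.2 i) = k0 ∧ (∑ i, p.1 i * p.2 i) = d),
      ∏ i : Fin m,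
        qbinom q
          (2 * d0 - 2 * ∑ j ∈ Finset.univ.filter (fun j => j < i),
            (p.1 j - p.1 i) * p.2 j)
          (p.2 i)

/-- The index set of the terms of `f q d0 d k` with exactly `m` distinct parts. -/
noncomputable def partPairs (m : ℕ) (d k : ℤ) : Finset ((Fin m → ℤ) × (Fin m → ℤ)) :=
  (Fintype.piFinset (fun _ : Fin m => Finset.Icc (1 : ℤ) d) ×ˢ
    Fintype.piFinset (fun _ : Fin m => Finset.Icc (1 : ℤ) d)).filter
      (fun p => StrictAnti p.1 ∧ (∑ i, p.2 i) = k ∧ (∑ i, p.1 i * p.2 i) = d)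

/-- The term of `f q d0 d k` indexed by the pair `p` of parts and multiplicities. -/
noncomputable def partWeight (q : ℝ) (d0 : ℤ) {m : ℕ} (p : (Fin m → ℤ) × (Fin m → ℤ)) : ℝ :=
  ∏ i : Fin m,
    qbinom q
      (2 * d0 - 2 * ∑ j ∈ Finset.univ.filter (fun j => j < i), (p.1 j - p.1 i) * p.2 j)
      (p.2 i)

theorem mem_partPairs {m : ℕ} {d k : ℤ} {p : (Fin m → ℤ) × (Fin m → ℤ)} :
    p ∈ partPairs m d k ↔ (∀ i, 1 ≤ p.1 i) ∧ (∀ i, 1 ≤ p.2 i) ∧ StrictAnti p.1 ∧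
      (∑ i, p.2 i) = k ∧ (∑ i, p.1 i * p.2 i) = d := by
  simp only [partPairs, Finset.mem_filter, Finset.mem_product, Fintype.mem_piFinset,
    Finset.mem_Icc]
  constructor
  · rintro ⟨⟨h1, h2⟩, h3⟩
    exact ⟨fun i => (h1 i).1, fun i => (h2 i).1, h3⟩
  · rintro ⟨h1, h2, h3, h4, h5⟩
    have key : ∀ i, p.1 i * p.2 i ≤ d := fun i => h5 ▸
      Finset.single_le_sum (f := fun i => p.1 i * p.2 i)
        (fun j _ => mul_nonneg (by linarith [h1 j]) (by linarith [h2 j])) (Finset.mem_univ i)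
    refine ⟨⟨fun i => ⟨h1 i, ?_⟩, fun i => ⟨h2 i, ?_⟩⟩, h3, h4, h5⟩
    · nlinarith [h1 i, h2 i, key i]
    · nlinarith [h1 i, h2 i, key i]

theorem le_of_mem_partPairs {m : ℕ} {d k : ℤ} {p : (Fin m → ℤ) × (Fin m → ℤ)}
    (hp : p ∈ partPairs m d k) : (m : ℤ) ≤ d := by
  obtain ⟨h1, h2, -, -, h5⟩ := mem_partPairs.1 hp
  have := Finset.card_nsmul_le_sum Finset.univ (fun i => p.1 i * p.2 i) 1
    (fun i _ => by nlinarith [h1 i, h2 i])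
  simpa [h5] using this

theorem f_eq_sum_range (q : ℝ) (d0 d k : ℤ) {M : ℕ} (hM : d.toNat + 1 ≤ M) :
    f q d0 d k = ∑ m ∈ Finset.range M, ∑ p ∈ partPairs m d k, partWeight q d0 p := by
  refine Finset.sum_subset (Finset.range_subset_range.2 hM) fun m _ hm => ?_
  refine Finset.sum_eq_zero fun p hp => ?_
  have := le_of_mem_partPairs hp
  simp only [Finset.mem_range] at hm
  omega

theorem partPairs_zero {d k : ℤ} (hk : k ≠ 0) : partPairs 0 d k = ∅ := by
  ext p
  simp [mem_partPairs, hk.symm]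

/-- Append a smallest part `n` with multiplicity `k`, raising all other parts by `n`. -/
def appendPart {m : ℕ} (n k : ℤ) (p : (Fin m → ℤ) × (Fin m → ℤ)) :
    (Fin (m + 1) → ℤ) × (Fin (m + 1) → ℤ) :=
  (Fin.snoc (α := fun _ => ℤ) (fun i => p.1 i + n) n, Fin.snoc (α := fun _ => ℤ) p.2 k)

/-- Remove the smallest part, lowering all other parts by it. -/
def removePart {m : ℕ} (p : (Fin (m + 1) → ℤ) × (Fin (m + 1) → ℤ)) :
    (Fin m → ℤ) × (Fin m → ℤ) :=
  (fun i => p.1 i.castSucc - p.1 (Fin.last m), fun i => p.2 i.castSucc)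

theorem removePart_appendPart {m : ℕ} (n k : ℤ) (p : (Fin m → ℤ) × (Fin m → ℤ)) :
    removePart (appendPart n k p) = p := by
  simp [removePart, appendPart]

theorem appendPart_removePart {m : ℕ} (p : (Fin (m + 1) → ℤ) × (Fin (m + 1) → ℤ)) :
    appendPart (p.1 (Fin.last m)) (p.2 (Fin.last m)) (removePart p) = p := by
  refine Prod.ext (funext fun i => ?_) (funext fun i => ?_) <;>
    refine Fin.lastCases ?_ (fun i => ?_) i <;> simp [removePart, appendPart]

theorem partWeight_appendPart (q : ℝ) (d0 : ℤ) {m : ℕ} (n k : ℤ)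
    (p : (Fin m → ℤ) × (Fin m → ℤ)) :
    partWeight q d0 (appendPart n k p) =
      partWeight q d0 p * qbinom q (2 * d0 - 2 * ∑ i, p.1 i * p.2 i) k := by
  have hlast (i : Fin m) : ¬ Fin.last m < i.castSucc := (Fin.le_last _).not_gt
  simp [partWeight, appendPart, Fin.prod_univ_castSucc, Finset.sum_filter,
    Fin.sum_univ_castSucc, Fin.castSucc_lt_last, hlast]

theorem appendPart_mem {m : ℕ} {d k' n k : ℤ} (hn : 1 ≤ n) (hk : 1 ≤ k)
    {p : (Fin m → ℤ) × (Fin m → ℤ)} (hp : p ∈ partPairs m (d - n * k') (k' - k)) :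
    appendPart n k p ∈ partPairs (m + 1) d k' := by
  obtain ⟨h1, h2, h3, h4, h5⟩ := mem_partPairs.1 hp
  refine mem_partPairs.2 ⟨fun i => ?_, fun i => ?_, fun i j => ?_, ?_, ?_⟩
  · refine Fin.lastCases ?_ (fun i => ?_) i
    · simpa [appendPart] using hn
    · have := h1 i
      simp only [appendPart, Fin.snoc_castSucc]
      omega
  · refine Fin.lastCases ?_ (fun i => ?_) i
    · simpa [appendPart] using hk
    · simpa [appendPart] using h2 i
  · refine Fin.lastCases ?_ (fun i => ?_) i
    · exact fun h => absurd h (Fin.le_last j).not_gt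
    · refine Fin.lastCases ?_ (fun j => ?_) j
      · have := h1 i
        simp only [appendPart, Fin.snoc_castSucc, Fin.snoc_last]
        omega
      · intro h
        simpa [appendPart] using h3 (Fin.castSucc_lt_castSucc_iff.1 h)
  · simp [appendPart, Fin.sum_univ_castSucc, h4]
  · simp only [appendPart, Fin.sum_univ_castSucc, Fin.snoc_castSucc, Fin.snoc_last, add_mul,
      Finset.sum_add_distrib, ← Finset.mul_sum, h4, h5]
    ring

theorem removePart_mem {m : ℕ} {d k : ℤ} {p : (Fin (m + 1) → ℤ) × (Fin (m + 1) → ℤ)}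
    (hp : p ∈ partPairs (m + 1) d k) :
    removePart p ∈ partPairs m (d - p.1 (Fin.last m) * k) (k - p.2 (Fin.last m)) := by
  obtain ⟨-, h2, h3, h4, h5⟩ := mem_partPairs.1 hp
  rw [Fin.sum_univ_castSucc] at h4 h5
  refine mem_partPairs.2 ⟨fun i => ?_, fun i => h2 _, fun i j h => ?_, ?_, ?_⟩
  · have := h3 (Fin.castSucc_lt_last i)
    simp only [removePart]
    omega
  · have := h3 (Fin.castSucc_lt_castSucc_iff.2 h)
    simp only [removePart]
    omega
  · simp only [removePart]
    omega
  · simp only [removePart, sub_mul, Finset.sum_sub_distrib, ← Finset.mul_sum]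
    rw [← h4, ← h5]
    ring

theorem last_mem_Icc {m : ℕ} {d k : ℤ} {p : (Fin (m + 1) → ℤ) × (Fin (m + 1) → ℤ)}
    (hk : 1 ≤ k) (hp : p ∈ partPairs (m + 1) d k) :
    p.2 (Fin.last m) ∈ Finset.Icc 1 k ∧ p.1 (Fin.last m) ∈ Finset.Icc 1 (d / k) := by
  obtain ⟨h1, h2, h3, h4, h5⟩ := mem_partPairs.1 hp
  refine ⟨Finset.mem_Icc.2 ⟨h2 _, ?_⟩, Finset.mem_Icc.2 ⟨h1 _, ?_⟩⟩
  · rw [← h4]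
    exact Finset.single_le_sum (f := p.2) (fun j _ => by linarith [h2 j]) (Finset.mem_univ _)
  · rw [Int.le_ediv_iff_mul_le (by omega), ← h4, ← h5, Finset.mul_sum]
    exact Finset.sum_le_sum fun i _ =>
      mul_le_mul_of_nonneg_right (h3.antitone (Fin.le_last i)) (by linarith [h2 i])

theorem sum_partPairs_succ (q : ℝ) (d0 d k0 : ℤ) (hk0 : 1 ≤ k0) (m : ℕ) :
    ∑ p ∈ partPairs (m + 1) d k0, partWeight q d0 p =
      ∑ k ∈ Finset.Icc (1 : ℤ) k0, ∑ n ∈ Finset.Icc (1 : ℤ) (d / k0),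
        ∑ p ∈ partPairs m (d - n * k0) (k0 - k),
          partWeight q d0 p * qbinom q (2 * d0 - 2 * d + 2 * n * k0) k := by
  simp only [Finset.sum_sigma']
  refine Finset.sum_bij' (fun p _ => ⟨p.2 (Fin.last m), p.1 (Fin.last m), removePart p⟩)
    (fun x _ => appendPart x.2.1 x.1 x.2.2) ?_ ?_ ?_ ?_ ?_
  · intro p hp
    simp only [Finset.mem_sigma]
    exact ⟨(last_mem_Icc hk0 hp).1, (last_mem_Icc hk0 hp).2, removePart_mem hp⟩
  · rintro ⟨k, n, p⟩ hx
    simp only [Finset.mem_sigma, Finset.mem_Icc] at hx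
    exact appendPart_mem hx.2.1.1 hx.1.1 hx.2.2
  · intro p _
    exact appendPart_removePart p
  · rintro ⟨k, n, p⟩ _
    simp only [removePart_appendPart]
    simp [appendPart]
  · intro p hp
    conv_lhs => rw [← appendPart_removePart p, partWeight_appendPart]
    rw [(mem_partPairs.1 (removePart_mem hp)).2.2.2.2]
    ring_nf

/-- The recursion for `f` obtained by classifying the terms according to the smallest
part `n_m = n` and the corresponding multiplicity `k_m = k`: for `1 ≤ k0 ≤ d1` and
arbitrary `d0`,
`f(d0, d1, k0) = ∑_{k=1}^{k0} ∑_{n=1}^{⌊d1/k0⌋}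
  f(d0, d1 - n k0, k0 - k) · [2d0 - 2d1 + 2 n k0 choose k]_q`. -/
theorem f_recursion (q : ℝ) (hq0 : 0 < q) (hq1 : q ≠ 1)
    (k0 d1 d0 : ℤ) (hk0 : 1 ≤ k0) (hk0d1 : k0 ≤ d1) :
    f q d0 d1 k0
    = ∑ k ∈ Finset.Icc (1 : ℤ) k0, ∑ n ∈ Finset.Icc (1 : ℤ) (d1 / k0),
        f q d0 (d1 - n * k0) (k0 - k) * qbinom q (2 * d0 - 2 * d1 + 2 * n * k0) k := by
  rw [f_eq_sum_range q d0 d1 k0 le_rfl, Finset.sum_range_succ', partPairs_zero (by omega),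
    Finset.sum_empty, add_zero]
  simp only [sum_partPairs_succ q d0 d1 k0 hk0]
  rw [Finset.sum_comm]
  refine Finset.sum_congr rfl fun k _ => ?_
  rw [Finset.sum_comm]
  refine Finset.sum_congr rfl fun n hn => ?_
  have hnk : 1 ≤ n * k0 := by nlinarith [(Finset.mem_Icc.1 hn).1]
  rw [f_eq_sum_range q d0 (d1 - n * k0) (k0 - k) (M := d1.toNat) (by omega), Finset.sum_mul]
  exact Finset.sum_congr rfl fun m _ => (Finset.sum_mul _ _ _).symm
end
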